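/- arXiv:2305.12589 — 3 statements merged into one kernel-verified Lean document; each statement's English description precedes it below -/
import Mathlib

section
/- Let m ≥ 1, d ∈ {0,…,m−1}, 0 < s < 1, 1 ≤ p < ∞, η > 0 and 0 < ρ̲ < r̲ < r̄ < ρ̄ < 1. Set Q₁ = Q^d_{(1−ρ̄)η} × Q^{m−d}_{ρ̲η}, Q₂ = Q^d_{(1−r̄)η} × Q^{m−d}_{r̲η}, Q₃ = Q^d_{(1−r̲)η} × Q^{m−d}_{r̄η} and Q₄ = Q^d_{(1−ρ̲)η} × Q^{m−d}_{ρ̄η}. Then there is a constant C > 0, depending only on m, s, p, ρ̲, r̲, r̄, ρ̄, such that for every measurable u : Q₄ → ℝ^ν with u ∈ L^p(Q₄) and |u|_{W^{s,p}(Q₄)} < ∞, there exists a smooth map Φ : Q₄ → Q₄ (depending on u) with: (i) Φ(x′, x″) = (x′, ζ(x)) for every x = (x′, x″) ∈ Q₄, where ζ : Q₄ → Q^{m−d}_{ρ̄η} is smooth; (ii) for every x′ ∈ Q^d_{(1−ρ̄)η}, Φ is constant on {x′} × Q^{m−d}_{ρ̲η}; (iii) Supp Φ ⊂ Q₂ and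 Φ(Q₂) ⊂ Q₂; (iv) |u ∘ Φ|_{W^{s,p}(Q₃)} ≤ C |u|_{W^{s,p}(Q₄)} and ‖u ∘ Φ‖_{L^p(Q₃)} ≤ C ‖u‖_{L^p(Q₄)}. -/
open MeasureTheory Set Metric
open scoped ENNReal
noncomputable section

/-- `ℝ^m` with the Euclidean norm. -/
abbrev Eucl (n : ℕ) : Type := EuclideanSpace ℝ (Fin n)

/-- The `p`-th power of the Gagliardo seminorm. -/
noncomputable def gagliardoPow {α : Type*} [NormedAddCommGroup α] (m : ℕ) (σ p : ℝ)
    (A : Set (Eucl m)) (u : Eucl m → α) : ℝ≥0∞ :=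
  ∫⁻ x in A, ∫⁻ y in A, (‖u x - u y‖₊ : ℝ≥0∞) ^ p / (‖x - y‖₊ : ℝ≥0∞) ^ ((m : ℝ) + σ * p)

/-- The Gagliardo seminorm `|u|_{W^{σ,p}(A)}`. -/
noncomputable def gagliardoSeminorm {α : Type*} [NormedAddCommGroup α] (m : ℕ) (σ p : ℝ)
    (A : Set (Eucl m)) (u : Eucl m → α) : ℝ≥0∞ :=
  gagliardoPow m σ p A u ^ (1 / p)

/-- The product `Q^d_a × Q^{m-d}_b` of the open cube of radius `a` in the first `d`
coordinates with the open cube of radius `b` in the last `m - d` coordinates. -/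
def rect (m d : ℕ) (a b : ℝ) : Set (Eucl m) :=
  {x : Eucl m | ∀ i : Fin m, ((i : ℕ) < d → |x i| < a) ∧ (d ≤ (i : ℕ) → |x i| < b)}

lemma ob_tail (m : ℕ) (q : ℝ) (hq : (m : ℝ) < q) (lam : ℝ) (hlam : 0 < lam) :
    ∃ J : ℝ≥0∞, J ≠ ⊤ ∧ ∀ t : ℝ, 0 < t → ∀ x : Eucl m,
      ∫⁻ y, {y : Eucl m | t < lam * ‖x - y‖}.indicator
        (fun y => (‖x - y‖₊ : ℝ≥0∞) ^ (-q)) y ≤ J * (ENNReal.ofReal t) ^ ((m : ℝ) - q) := by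
  have hq0 : 0 < q := lt_of_le_of_lt (Nat.cast_nonneg m) hq
  set J0 : ℝ≥0∞ := ∫⁻ y : Eucl m, ENNReal.ofReal ((1 + ‖y‖) ^ (-q)) with hJ0
  have hJ0t : J0 < ⊤ := finite_integral_one_add_norm (by simpa using hq)
  refine ⟨ENNReal.ofReal (2 ^ q) * ENNReal.ofReal (lam ^ (q - m)) * J0, ?_, ?_⟩
  · exact ENNReal.mul_ne_top (by finiteness) hJ0t.ne
  intro t ht x
  set a : ℝ := t / lam with ha
  have ha0 : 0 < a := by positivity
  have key : ∀ y : Eucl m, {y : Eucl m | t < lam * ‖x - y‖}.indicator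
        (fun y => (‖x - y‖₊ : ℝ≥0∞) ^ (-q)) y ≤
        ENNReal.ofReal (2 ^ q * a ^ (-q)) * ENNReal.ofReal ((1 + ‖a⁻¹ • (x - y)‖) ^ (-q)) := by
    intro y
    by_cases hy : t < lam * ‖x - y‖
    · rw [Set.indicator_of_mem (by exact hy)]
      have hlt : a < ‖x - y‖ := by
        rw [ha, div_lt_iff₀ hlam]; linarith
      have hpos : 0 < ‖x - y‖ := lt_trans ha0 hlt
      have e1 : (‖x - y‖₊ : ℝ≥0∞) = ENNReal.ofReal ‖x - y‖ := by
        rw [← enorm_eq_nnnorm, ofReal_norm]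
      rw [e1, ENNReal.ofReal_rpow_of_pos hpos, ← ENNReal.ofReal_mul (by positivity)]
      apply ENNReal.ofReal_le_ofReal
      rw [norm_smul, Real.norm_of_nonneg (by positivity)]
      have h1 : (1 + a⁻¹ * ‖x - y‖) ≤ 2 * (a⁻¹ * ‖x - y‖) := by
        have : 1 ≤ a⁻¹ * ‖x - y‖ := by
          rw [← div_eq_inv_mul, le_div_iff₀ ha0]; linarith
        linarith
      have h2 : (2 * (a⁻¹ * ‖x - y‖)) ^ (-q) ≤ (1 + a⁻¹ * ‖x - y‖) ^ (-q) :=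
        Real.rpow_le_rpow_of_nonpos (by positivity) h1 (by linarith)
      calc ‖x - y‖ ^ (-q) = 2 ^ q * a ^ (-q) * (2 * (a⁻¹ * ‖x - y‖)) ^ (-q) := by
            rw [Real.mul_rpow (by positivity) (by positivity),
              Real.mul_rpow (by positivity) (by positivity), Real.inv_rpow ha0.le,
              Real.rpow_neg (by norm_num : (0:ℝ) ≤ 2)]
            have : a ^ (-q) ≠ 0 := by positivity
            field_simp
        _ ≤ _ := by gcongr
    · rw [Set.indicator_of_notMem (by exact hy)]
      exact zero_le
  refine (lintegral_mono key).trans ?_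
  rw [lintegral_const_mul' _ _ ENNReal.ofReal_ne_top]
  rw [lintegral_sub_left_eq_self (fun z : Eucl m => ENNReal.ofReal ((1 + ‖a⁻¹ • z‖) ^ (-q))) x]
  have hsc : ∫⁻ z : Eucl m, ENNReal.ofReal ((1 + ‖a⁻¹ • z‖) ^ (-q))
      = ENNReal.ofReal (a ^ (m : ℝ)) * J0 := by
    have hmeas : Measurable fun z : Eucl m => ENNReal.ofReal ((1 + ‖z‖) ^ (-q)) := by
      fun_prop
    have := lintegral_map (μ := (volume : Measure (Eucl m))) hmeas
      (measurable_const_smul (a⁻¹))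
    rw [← this, Measure.map_addHaar_smul _ (by positivity), lintegral_smul_measure, smul_eq_mul]
    congr 2
    rw [finrank_euclideanSpace_fin, abs_of_pos (by positivity), Real.rpow_natCast, inv_pow, inv_inv]
  rw [hsc, ENNReal.ofReal_rpow_of_pos ht]
  have : 2 ^ q * a ^ (-q) * a ^ (m : ℝ) = 2 ^ q * lam ^ (q - m) * t ^ ((m : ℝ) - q) := by
    rw [mul_assoc, mul_assoc, ← Real.rpow_add ha0, ha, Real.div_rpow ht.le hlam.le,
      show q - (m : ℝ) = -(-q + m) by ring, Real.rpow_neg hlam.le,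
      show (m : ℝ) - q = -q + m by ring]
    field_simp
  rw [← mul_assoc, ← ENNReal.ofReal_mul (by positivity), this, ENNReal.ofReal_mul (by positivity),
    ENNReal.ofReal_mul (by positivity)]
  apply le_of_eq
  ring

/-- the inner density of the Gagliardo energy -/
def obG (m ν : ℕ) (N p : ℝ) (D : Set (Eucl m)) (u : Eucl m → Eucl ν) (X : Eucl m) : ℝ≥0∞ :=
  ∫⁻ W in D, (‖u X - u W‖₊ : ℝ≥0∞) ^ p / (‖X - W‖₊ : ℝ≥0∞) ^ N

/-- the integrand in the triple integral -/
def obT (m ν : ℕ) (q p lam : ℝ) (u : Eucl m → Eucl ν) (Φ : Eucl m → Eucl m)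
    (x y W : Eucl m) : ℝ≥0∞ :=
  (‖u (Φ x) - u W‖₊ : ℝ≥0∞) ^ p * {y : Eucl m | ‖Φ x - W‖ < lam * ‖x - y‖}.indicator
        (fun y => (‖x - y‖₊ : ℝ≥0∞) ^ (-q)) y

lemma obG_meas (m ν : ℕ) (N p : ℝ) (D : Set (Eucl m)) (u : Eucl m → Eucl ν) (hu : Measurable u) :
    Measurable (obG m ν N p D u) := by
  unfold obG
  apply Measurable.lintegral_prod_right' (f := fun z : Eucl m × Eucl m =>
    (‖u z.1 - u z.2‖₊ : ℝ≥0∞) ^ p / (‖z.1 - z.2‖₊ : ℝ≥0∞) ^ N)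
  fun_prop

lemma obT_meas (m ν : ℕ) (q p lam : ℝ) (u : Eucl m → Eucl ν) (hu : Measurable u)
    (Φ : Eucl m → Eucl m) (hΦ : Measurable Φ) :
    Measurable (fun z : Eucl m × Eucl m × Eucl m => obT m ν q p lam u Φ z.1 z.2.1 z.2.2) := by
  have : (fun z : Eucl m × Eucl m × Eucl m => obT m ν q p lam u Φ z.1 z.2.1 z.2.2) =
    fun z => (‖u (Φ z.1) - u z.2.2‖₊ : ℝ≥0∞) ^ p *
      {z : Eucl m × Eucl m × Eucl m | ‖Φ z.1 - z.2.2‖ < lam * ‖z.1 - z.2.1‖}.indicator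
        (fun z => (‖z.1 - z.2.1‖₊ : ℝ≥0∞) ^ (-q)) z := by
    funext z
    simp only [obT, Set.indicator_apply, Set.mem_ofPred_eq]
  rw [this]
  apply Measurable.mul (by fun_prop)
  apply Measurable.indicator (by fun_prop)
  exact measurableSet_lt (by fun_prop) (by fun_prop)

lemma obT_bound (m ν : ℕ) (N p lam : ℝ) (hN : 0 < N) (hp : 0 < p) (hlam : 0 < lam) :
    ∃ J : ℝ≥0∞, J ≠ ⊤ ∧ ∀ (u : Eucl m → Eucl ν) (_ : Measurable u)
      (Φ : Eucl m → Eucl m) (_ : Measurable Φ) (A D : Set (Eucl m)),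
      ∫⁻ x in A, ∫⁻ y in A, ∫⁻ W in D, obT m ν (N + m) p lam u Φ x y W ≤
        J * ∫⁻ x in A, obG m ν N p D u (Φ x) := by
  obtain ⟨J, hJ, hb⟩ := ob_tail m (N + m) (by linarith) lam hlam
  refine ⟨J, hJ, ?_⟩
  intro u hu Φ hΦ A D
  rw [← lintegral_const_mul' _ _ hJ]
  apply lintegral_mono
  intro x
  have hm := obT_meas m ν (N + m) p lam u hu Φ hΦ
  have hm1 : Measurable (Function.uncurry fun y W : Eucl m => obT m ν (N + m) p lam u Φ x y W) :=
    Measurable.comp (g := fun z : Eucl m × Eucl m × Eucl m => obT m ν (N + m) p lam u Φ z.1 z.2.1 z.2.2)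
      (f := fun z : Eucl m × Eucl m => (x, z.1, z.2)) hm (by fun_prop)
  beta_reduce
  rw [lintegral_lintegral_swap hm1.aemeasurable, obG, ← lintegral_const_mul' _ _ hJ]
  apply lintegral_mono
  intro W
  beta_reduce
  refine (setLIntegral_le_lintegral A _).trans ?_
  unfold obT
  by_cases hW : Φ x = W
  · subst hW
    simp [ENNReal.zero_rpow_of_pos hp]
  have hpos : 0 < ‖Φ x - W‖ := norm_pos_iff.2 (sub_ne_zero.2 hW)
  have hfin : (‖u (Φ x) - u W‖₊ : ℝ≥0∞) ^ p ≠ ⊤ :=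
    ENNReal.rpow_ne_top_of_nonneg hp.le ENNReal.coe_ne_top
  rw [lintegral_const_mul' _ _ hfin]
  have h := hb _ hpos x
  rw [show (m : ℝ) - (N + m) = -N by ring, ofReal_norm, enorm_eq_nnnorm] at h
  calc _ ≤ (‖u (Φ x) - u W‖₊ : ℝ≥0∞) ^ p * (J * (‖Φ x - W‖₊ : ℝ≥0∞) ^ (-N)) := by gcongr
    _ = _ := by rw [ENNReal.rpow_neg, div_eq_mul_inv]; ring


lemma obT_meas2 (m ν : ℕ) (q p lam : ℝ) (u : Eucl m → Eucl ν) (hu : Measurable u)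
    (Φ : Eucl m → Eucl m) (hΦ : Measurable Φ) (D : Set (Eucl m)) :
    Measurable (fun z : Eucl m × Eucl m => ∫⁻ W in D, obT m ν q p lam u Φ z.1 z.2 W) := by
  have hm := obT_meas m ν q p lam u hu Φ hΦ
  apply Measurable.lintegral_prod_right' (f := fun w : (Eucl m × Eucl m) × Eucl m =>
    obT m ν q p lam u Φ w.1.1 w.1.2 w.2)
  exact Measurable.comp
    (g := fun z : Eucl m × Eucl m × Eucl m => obT m ν q p lam u Φ z.1 z.2.1 z.2.2)
    (f := fun w : (Eucl m × Eucl m) × Eucl m => (w.1.1, w.1.2, w.2)) hm (by fun_prop)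

lemma ob_pointwise (m ν : ℕ) (hm : 1 ≤ m) (N p L κ : ℝ) (hN : 0 < N) (hp : 1 ≤ p)
    (hκ : 0 < κ) (hL : 0 ≤ L)
    (u : Eucl m → Eucl ν) (hu : Measurable u) (Φ : Eucl m → Eucl m) (hΦ : Measurable Φ)
    (D : Set (Eucl m)) (x y : Eucl m)
    (hLip : ‖Φ x - Φ y‖ ≤ L * ‖x - y‖) (hB : ball (Φ x) (κ * ‖x - y‖) ⊆ D) :
    (‖u (Φ x) - u (Φ y)‖₊ : ℝ≥0∞) ^ p / (‖x - y‖₊ : ℝ≥0∞) ^ N ≤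
      (2 ^ (p - 1) * (ENNReal.ofReal (κ ^ m) * volume (ball (0 : Eucl m) 1))⁻¹) *
       ((∫⁻ W in D, obT m ν (N + m) p κ u Φ x y W) +
        ∫⁻ W in D, obT m ν (N + m) p (L + κ) u Φ y x W) := by
  have hp0 : 0 < p := by linarith
  by_cases hxy : x = y
  · subst hxy
    simp [ENNReal.zero_rpow_of_pos hp0]
  have : Nonempty (Fin m) := ⟨⟨0, hm⟩⟩
  have hr : 0 < ‖x - y‖ := norm_pos_iff.2 (sub_ne_zero.2 hxy)
  set r : ℝ≥0∞ := (‖x - y‖₊ : ℝ≥0∞) with hrdef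
  have hr0 : r ≠ 0 := by simp [hrdef, sub_eq_zero, hxy]
  have hrt : r ≠ ⊤ := by simp [hrdef]
  have hrof : ENNReal.ofReal ‖x - y‖ = r := by rw [ofReal_norm, enorm_eq_nnnorm]
  set v := ENNReal.ofReal (κ ^ m) * volume (ball (0 : Eucl m) 1) with hv
  have hv0 : v ≠ 0 := by
    rw [hv]
    refine mul_ne_zero (by simp; positivity) (measure_ball_pos _ _ one_pos).ne'
  have hvt : v ≠ ⊤ := by
    rw [hv]
    exact ENNReal.mul_ne_top ENNReal.ofReal_ne_top measure_ball_lt_top.ne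
  have hvol : volume (ball (Φ x) (κ * ‖x - y‖)) = v * r ^ (m : ℝ) := by
    rw [Measure.addHaar_ball _ _ (by positivity), finrank_euclideanSpace_fin, mul_pow,
      ENNReal.ofReal_mul (by positivity), ENNReal.ofReal_pow hr.le, hrof, hv, ENNReal.rpow_natCast]
    ring
  set a : ℝ≥0∞ := (‖u (Φ x) - u (Φ y)‖₊ : ℝ≥0∞) ^ p with ha
  have hm1 : Measurable (fun W => obT m ν (N + m) p κ u Φ x y W) :=
    Measurable.comp
    (g := fun z : Eucl m × Eucl m × Eucl m => obT m ν (N + m) p κ u Φ z.1 z.2.1 z.2.2)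
    (f := fun w : Eucl m => (x, y, w)) (obT_meas m ν _ p κ u hu Φ hΦ) (by fun_prop)
  have h2t : (2 : ℝ≥0∞) ^ (p - 1) ≠ ⊤ :=
    ENNReal.rpow_ne_top_of_nonneg (by linarith) (by norm_num)
  have key : a * r ^ (-(N + m)) * (v * r ^ (m : ℝ)) ≤ 2 ^ (p - 1) *
       ((∫⁻ W in D, obT m ν (N + m) p κ u Φ x y W) +
        ∫⁻ W in D, obT m ν (N + m) p (L + κ) u Φ y x W) := by
    rw [← hvol, ← setLIntegral_const, ← lintegral_add_left hm1, ← lintegral_const_mul' _ _ h2t]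
    refine le_trans ?_ (lintegral_mono_set hB)
    apply setLIntegral_mono' measurableSet_ball
    intro W hW
    rw [mem_ball, dist_eq_norm] at hW
    have hW1 : ‖Φ x - W‖ < κ * ‖x - y‖ := by rwa [norm_sub_rev]
    have hW2 : ‖Φ y - W‖ < (L + κ) * ‖y - x‖ := by
      have : ‖Φ y - W‖ ≤ ‖Φ y - Φ x‖ + ‖Φ x - W‖ := norm_sub_le_norm_sub_add_norm_sub _ _ _
      rw [norm_sub_rev (Φ y) (Φ x)] at this
      rw [norm_sub_rev y]
      linarith
    unfold obT
    rw [Set.indicator_of_mem (by exact hW1), Set.indicator_of_mem (by exact hW2)]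
    have e : (‖y - x‖₊ : ℝ≥0∞) = r := by rw [hrdef, ← nnnorm_neg, neg_sub]
    rw [e, ← hrdef, ← add_mul, ← mul_assoc]
    gcongr
    refine le_trans ?_ (ENNReal.rpow_add_le_mul_rpow_add_rpow _ _ hp)
    rw [ha]
    gcongr
    rw [← ENNReal.coe_add, ENNReal.coe_le_coe]
    rw [← nnnorm_neg (u (Φ y) - u W), neg_sub]
    have := nnnorm_add_le (u (Φ x) - u W) (u W - u (Φ y))
    simpa using this
  have e2 : a / r ^ N = v⁻¹ * (a * r ^ (-(N + m)) * (v * r ^ (m : ℝ))) := by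
    have : r ^ (-(N + m)) * r ^ (m : ℝ) = (r ^ N)⁻¹ := by
      rw [← ENNReal.rpow_add _ _ hr0 hrt, ← ENNReal.rpow_neg]
      congr 1; ring
    calc a / r ^ N = (v⁻¹ * v) * a * (r ^ (-(N + m)) * r ^ (m : ℝ)) := by
          rw [ENNReal.inv_mul_cancel hv0 hvt, this, one_mul, div_eq_mul_inv]
      _ = _ := by ring
  rw [e2, mul_comm (2 ^ (p - 1)) v⁻¹, mul_assoc v⁻¹]
  exact mul_le_mul_right key _

lemma ob_gag (m ν : ℕ) (hm : 1 ≤ m) (N p L κ : ℝ) (hN : 0 < N) (hp : 1 ≤ p)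
    (hκ : 0 < κ) (hL : 0 ≤ L) :
    ∃ C : ℝ≥0∞, C ≠ ⊤ ∧ ∀ (u : Eucl m → Eucl ν) (_ : Measurable u)
      (Φ : Eucl m → Eucl m) (_ : Measurable Φ) (A D : Set (Eucl m)) (_ : MeasurableSet A)
      (_ : ∀ x ∈ A, ∀ y ∈ A, ‖Φ x - Φ y‖ ≤ L * ‖x - y‖)
      (_ : ∀ x ∈ A, ∀ y ∈ A, ball (Φ x) (κ * ‖x - y‖) ⊆ D),
      ∫⁻ x in A, ∫⁻ y in A,
        (‖u (Φ x) - u (Φ y)‖₊ : ℝ≥0∞) ^ p / (‖x - y‖₊ : ℝ≥0∞) ^ N ≤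
        C * ∫⁻ x in A, obG m ν N p D u (Φ x) := by
  obtain ⟨J1, hJ1, hb1⟩ := obT_bound m ν N p κ hN (by linarith) hκ
  obtain ⟨J2, hJ2, hb2⟩ := obT_bound m ν N p (L + κ) hN (by linarith) (by linarith)
  set c : ℝ≥0∞ := 2 ^ (p - 1) * (ENNReal.ofReal (κ ^ m) * volume (ball (0 : Eucl m) 1))⁻¹ with hc
  have hct : c ≠ ⊤ := by
    refine ENNReal.mul_ne_top (ENNReal.rpow_ne_top_of_nonneg (by linarith) (by norm_num)) ?_
    rw [ENNReal.inv_ne_top]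
    exact mul_ne_zero (by simp; positivity) (measure_ball_pos _ _ one_pos).ne'
  refine ⟨c * (J1 + J2), ENNReal.mul_ne_top hct (ENNReal.add_ne_top.2 ⟨hJ1, hJ2⟩), ?_⟩
  intro u hu Φ hΦ A D hA hLip hB
  have hM1 := obT_meas2 m ν (N + m) p κ u hu Φ hΦ D
  have hM2 := obT_meas2 m ν (N + m) p (L + κ) u hu Φ hΦ D
  have hM1x : ∀ x, Measurable fun y => ∫⁻ W in D, obT m ν (N + m) p κ u Φ x y W := fun x =>
    Measurable.comp (g := fun z : Eucl m × Eucl m => ∫⁻ W in D, obT m ν (N + m) p κ u Φ z.1 z.2 W)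
      (f := fun y => (x, y)) hM1 (by fun_prop)
  have hM1i : Measurable fun x => ∫⁻ y in A, ∫⁻ W in D, obT m ν (N + m) p κ u Φ x y W :=
    Measurable.lintegral_prod_right' (f := fun z : Eucl m × Eucl m =>
      ∫⁻ W in D, obT m ν (N + m) p κ u Φ z.1 z.2 W) hM1
  have hM2s : Measurable (Function.uncurry
      fun x y => ∫⁻ W in D, obT m ν (N + m) p (L + κ) u Φ y x W) :=
    Measurable.comp
      (g := fun z : Eucl m × Eucl m => ∫⁻ W in D, obT m ν (N + m) p (L + κ) u Φ z.1 z.2 W)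
      (f := fun z : Eucl m × Eucl m => (z.2, z.1)) hM2 (by fun_prop)
  calc _ ≤ ∫⁻ x in A, ∫⁻ y in A, c * ((∫⁻ W in D, obT m ν (N + m) p κ u Φ x y W) +
        ∫⁻ W in D, obT m ν (N + m) p (L + κ) u Φ y x W) := by
        apply setLIntegral_mono' hA
        intro x hx
        apply setLIntegral_mono' hA
        intro y hy
        exact ob_pointwise m ν hm N p L κ hN hp hκ hL u hu Φ hΦ D x y (hLip x hx y hy)
          (hB x hx y hy)
    _ = c * ((∫⁻ x in A, ∫⁻ y in A, ∫⁻ W in D, obT m ν (N + m) p κ u Φ x y W) +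
        ∫⁻ x in A, ∫⁻ y in A, ∫⁻ W in D, obT m ν (N + m) p (L + κ) u Φ y x W) := by
        rw [← lintegral_add_left hM1i, ← lintegral_const_mul' _ _ hct]
        congr 1
        funext x
        rw [lintegral_const_mul' _ _ hct, lintegral_add_left (hM1x x)]
    _ ≤ c * (J1 * (∫⁻ x in A, obG m ν N p D u (Φ x)) +
          J2 * ∫⁻ x in A, obG m ν N p D u (Φ x)) := by
        gcongr
        · exact hb1 u hu Φ hΦ A D
        · rw [lintegral_lintegral_swap hM2s.aemeasurable]
          exact hb2 u hu Φ hΦ A D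
    _ = _ := by ring

lemma ob_avg (m : ℕ) (V : Eucl m → Eucl m) (hV : Measurable V) (A B D Z : Set (Eucl m))
    (hA : MeasurableSet A) (hB : MeasurableSet B) (hD : MeasurableSet D) (hZ : MeasurableSet Z)
    (hAD : ∀ z ∈ Z, ∀ x ∈ A, x - V (x + z) ∈ D) (hAB : ∀ z ∈ Z, ∀ x ∈ A, x + z ∈ B)
    (g : Eucl m → ℝ≥0∞) (hg : Measurable g) :
    ∫⁻ z in Z, ∫⁻ x in A, g (x - V (x + z)) ≤ volume B * ∫⁻ x in D, g x := by
  set G := D.indicator g with hG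
  have hGm : Measurable G := hg.indicator hD
  have step : ∀ z ∈ Z, ∫⁻ x in A, g (x - V (x + z)) ≤ ∫⁻ y in B, G (y - V y - z) := by
    intro z hz
    rw [← lintegral_indicator hA, ← lintegral_indicator hB,
      ← lintegral_add_right_eq_self (μ := volume)
        (B.indicator fun y => G (y - V y - z)) z]
    apply lintegral_mono
    intro x
    beta_reduce
    by_cases hx : x ∈ A
    · rw [Set.indicator_of_mem hx, Set.indicator_of_mem (hAB z hz x hx)]
      have : x + z - V (x + z) - z = x - V (x + z) := by abel
      rw [this, hG, Set.indicator_of_mem (hAD z hz x hx)]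
    · rw [Set.indicator_of_notMem hx]
      exact zero_le
  refine (setLIntegral_mono' hZ step).trans ?_
  refine (setLIntegral_le_lintegral Z _).trans ?_
  have hmeas : Measurable (Function.uncurry fun z y : Eucl m => G (y - V y - z)) := by
    apply hGm.comp
    fun_prop
  rw [lintegral_lintegral_swap hmeas.aemeasurable]
  have : ∀ y : Eucl m, ∫⁻ z, G (y - V y - z) = ∫⁻ x in D, g x := by
    intro y
    rw [lintegral_sub_left_eq_self G (y - V y), hG, lintegral_indicator hD]
  simp_rw [this]
  rw [setLIntegral_const, mul_comm]

lemma ob_select {E : Type*} [MeasurableSpace E] (μ : Measure E) (Z : Set E) (h0 : μ Z ≠ 0)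
    (ht : μ Z ≠ ⊤) (f h : E → ℝ≥0∞) (hf : Measurable f) (hh : Measurable h) (a b : ℝ≥0∞)
    (ha : ∫⁻ z in Z, f z ∂μ ≤ a) (hb : ∫⁻ z in Z, h z ∂μ ≤ b) :
    ∃ z ∈ Z, f z ≤ 2 / μ Z * a ∧ h z ≤ 2 / μ Z * b := by
  obtain ⟨z, hz, hle⟩ := exists_le_setLAverage (f := fun z => f z / a + h z / b) h0 ht
    ((hf.div_const a).add (hh.div_const b)).aemeasurable
  rw [setLAverage_eq, lintegral_add_left (hf.div_const a)] at hle
  simp_rw [div_eq_mul_inv] at hle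
  rw [lintegral_mul_const _ hf, lintegral_mul_const _ hh] at hle
  have h1 : ∀ c d : ℝ≥0∞, c ≤ d → c * d⁻¹ ≤ 1 := fun c d hcd => by
    rw [← div_eq_mul_inv]
    exact ENNReal.div_le_of_le_mul (by simpa using hcd)
  have h2 : f z / a + h z / b ≤ 2 / μ Z := by
    refine hle.trans ?_
    rw [div_eq_mul_inv]
    gcongr
    calc _ ≤ (1 : ℝ≥0∞) + 1 := add_le_add (h1 _ _ ha) (h1 _ _ hb)
      _ = 2 := one_add_one_eq_two
  have hc0 : 2 / μ Z ≠ 0 := by simp [ht]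
  have hct : 2 / μ Z ≠ ⊤ := ENNReal.div_ne_top (by simp) h0
  refine ⟨z, hz, ?_, ?_⟩
  · exact (ENNReal.div_le_iff_le_mul (Or.inr hct) (Or.inr hc0)).1 (le_trans le_self_add h2)
  · exact (ENNReal.div_le_iff_le_mul (Or.inr hct) (Or.inr hc0)).1 (le_trans le_add_self h2)

lemma ob_norm_le (m d : ℕ) (a b η : ℝ) (hη : 0 ≤ η) (ha : a ≤ η) (hb : b ≤ η) (x : Eucl m)
    (hx : x ∈ rect m d a b) : ‖x‖ ≤ m * η := by
  rw [EuclideanSpace.norm_eq, Real.sqrt_le_iff]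
  refine ⟨by positivity, ?_⟩
  have hi : ∀ i : Fin m, ‖x i‖ ^ 2 ≤ η ^ 2 := by
    intro i
    have : ‖x i‖ ≤ η := by
      rw [Real.norm_eq_abs]
      rcases lt_or_ge (i : ℕ) d with h | h
      · exact ((hx i).1 h).le.trans ha
      · exact ((hx i).2 h).le.trans hb
    gcongr
  calc ∑ i, ‖x i‖ ^ 2 ≤ ∑ _i : Fin m, η ^ 2 := Finset.sum_le_sum fun i _ => hi i
    _ = m * η ^ 2 := by simp
    _ ≤ m ^ 2 * η ^ 2 := by
      gcongr
      have : m ≤ m ^ 2 := Nat.le_self_pow (by norm_num) m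
      exact_mod_cast this
    _ = _ := by ring

lemma ob_coord_le (m : ℕ) (x : Eucl m) (i : Fin m) : |x i| ≤ ‖x‖ := by
  simpa using PiLp.norm_apply_le x i

lemma ob_rect_open (m d : ℕ) (a b : ℝ) : IsOpen (rect m d a b) := by
  have : rect m d a b = ⋂ i : Fin m, {x : Eucl m | |x i| < if (i : ℕ) < d then a else b} := by
    ext x
    simp only [rect, Set.mem_iInter, Set.mem_ofPred_eq]
    refine forall_congr' fun i => ?_
    split_ifs with h
    · simp [h]
    · simp [h, not_lt.1 h]
  rw [this]
  apply isOpen_iInter_of_finite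
  intro i
  exact isOpen_lt (by fun_prop) continuous_const

lemma ob_V (m d : ℕ) (ai ao bi bo : ℝ) (h1 : 0 < ai) (h2 : ai < ao) (h3 : 0 < bi) (h4 : bi < bo)
    (h5 : ao ≤ 1) (h6 : bo ≤ 1) :
    ∃ (V : Eucl m → Eucl m) (χ : Eucl m → ℝ), ContDiff ℝ (⊤ : ℕ∞) V ∧
      (∃ K, LipschitzWith K V) ∧ (∀ y, 0 ≤ χ y ∧ χ y ≤ 1) ∧
      (∀ y i, V y i = if d ≤ (i : ℕ) then χ y * y i else 0) ∧
      (∀ y, χ y ≠ 0 → y ∈ rect m d ao bo) ∧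
      (∀ y ∈ rect m d ai bi, χ y = 1) := by
  let ba : ContDiffBump (0 : ℝ) := ⟨ai, ao, h1, h2⟩
  let bb : ContDiffBump (0 : ℝ) := ⟨bi, bo, h3, h4⟩
  let χ : Eucl m → ℝ := fun y => ∏ i : Fin m, if (i : ℕ) < d then ba (y i) else bb (y i)
  let V : Eucl m → Eucl m := fun y => WithLp.toLp 2 fun i => if d ≤ (i : ℕ) then χ y * y i else 0
  have hχs : ContDiff ℝ (⊤ : ℕ∞) χ := by
    apply contDiff_prod
    intro i _
    split_ifs
    · exact ba.contDiff.comp (by fun_prop)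
    · exact bb.contDiff.comp (by fun_prop)
  have hχ1 : ∀ y, χ y ≠ 0 → y ∈ rect m d ao bo := by
    intro y hy i
    have hi := (Finset.prod_ne_zero_iff.1 hy) i (Finset.mem_univ i)
    constructor
    · intro h
      rw [if_pos h] at hi
      have : y i ∈ Function.support ba := hi
      rw [ba.support_eq] at this
      simpa [ba] using this
    · intro h
      rw [if_neg (not_lt.2 h)] at hi
      have : y i ∈ Function.support bb := hi
      rw [bb.support_eq] at this
      simpa [bb] using this
  have hVs : ContDiff ℝ (⊤ : ℕ∞) V := by
    rw [contDiff_piLp]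
    intro i
    by_cases h : d ≤ (i : ℕ)
    · simp only [V, if_pos h]
      exact hχs.mul (by fun_prop)
    · simp only [V, if_neg h]
      exact contDiff_const
  refine ⟨V, χ, hVs, ?_, ?_, fun y i => rfl, hχ1, ?_⟩
  · refine ContDiff.lipschitzWith_of_hasCompactSupport ?_ hVs (by simp)
    apply HasCompactSupport.of_support_subset_isCompact (isCompact_closedBall (0 : Eucl m) m)
    intro y hy
    have hc : χ y ≠ 0 := by
      intro h0
      apply hy
      ext i
      simp [V, h0]
    have := ob_norm_le m d ao bo 1 zero_le_one h5 h6 y (hχ1 y hc)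
    simpa using this
  · intro y
    constructor
    · apply Finset.prod_nonneg
      intro i _
      split_ifs
      · exact ba.nonneg
      · exact bb.nonneg
    · apply Finset.prod_le_one
      · intro i _
        split_ifs
        · exact ba.nonneg
        · exact bb.nonneg
      · intro i _
        split_ifs
        · exact ba.le_one
        · exact bb.le_one
  · intro y hy
    apply Finset.prod_eq_one
    intro i _
    split_ifs with h
    · apply ba.one_of_mem_closedBall
      simpa [ba] using ((hy i).1 h).le
    · apply bb.one_of_mem_closedBall
      simpa [bb] using ((hy i).2 (not_lt.1 h)).le

lemma ob_convex_abs (c x z b : ℝ) (hc0 : 0 ≤ c) (hc1 : c ≤ 1) (hx : |x| < b) (hz : |z| < b) :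
    |x - c * (x + z)| < b := by
  have h := (convex_Ioo (-b) b) (abs_lt.1 hx) (abs_lt.1 (by rwa [abs_neg] : |-z| < b))
    (sub_nonneg.2 hc1) hc0 (by ring)
  rw [abs_lt]
  have e : (1 - c) • x + c • (-z) = x - c * (x + z) := by
    simp only [smul_eq_mul]; ring
  rw [e] at h
  exact h

lemma ob_dfixed
    (m ν : ℕ) (hm : 1 ≤ m) (s p : ℝ) (hs0 : 0 < s) (hp : 1 ≤ p)
    (ρ₁ r₁ r₂ ρ₂ : ℝ) (h0 : 0 < ρ₁) (h1 : ρ₁ < r₁) (h2 : r₁ < r₂) (h3 : r₂ < ρ₂)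
    (h4 : ρ₂ < 1) (d : ℕ) :
    ∃ C : ℝ≥0∞, C ≠ ⊤ ∧
       ∀ (η : ℝ), 0 < η →
        ∀ u : Eucl m → Eucl ν, Measurable u →
          ∃ Φ : Eucl m → Eucl m,
            ContDiffOn ℝ (⊤ : ℕ∞) Φ (rect m d ((1 - ρ₁) * η) (ρ₂ * η)) ∧
            MapsTo Φ (rect m d ((1 - ρ₁) * η) (ρ₂ * η)) (rect m d ((1 - ρ₁) * η) (ρ₂ * η)) ∧
            (∀ x ∈ rect m d ((1 - ρ₁) * η) (ρ₂ * η), ∀ i : Fin m, (i : ℕ) < d → Φ x i = x i) ∧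
            (∀ x ∈ rect m d ((1 - ρ₂) * η) (ρ₁ * η), ∀ y ∈ rect m d ((1 - ρ₂) * η) (ρ₁ * η),
              (∀ i : Fin m, (i : ℕ) < d → x i = y i) → Φ x = Φ y) ∧
            closure {x | x ∈ rect m d ((1 - ρ₁) * η) (ρ₂ * η) ∧ Φ x ≠ x}
              ⊆ rect m d ((1 - r₂) * η) (r₁ * η) ∧
            MapsTo Φ (rect m d ((1 - r₂) * η) (r₁ * η)) (rect m d ((1 - r₂) * η) (r₁ * η)) ∧
            gagliardoPow m s p (rect m d ((1 - r₁) * η) (r₂ * η)) (fun x => u (Φ x))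
              ≤ C * gagliardoPow m s p (rect m d ((1 - ρ₁) * η) (ρ₂ * η)) u ∧
            (∫⁻ x in rect m d ((1 - r₁) * η) (r₂ * η), (‖u (Φ x)‖₊ : ℝ≥0∞) ^ p)
              ≤ C * ∫⁻ x in rect m d ((1 - ρ₁) * η) (ρ₂ * η), (‖u x‖₊ : ℝ≥0∞) ^ p := by
  obtain ⟨τ, hτ, hτ1, hτ2⟩ : ∃ τ : ℝ, 0 < τ ∧ 4 * τ ≤ r₁ - ρ₁ ∧ 4 * τ ≤ ρ₂ - r₂ := by
    refine ⟨min (r₁ - ρ₁) (ρ₂ - r₂) / 4, ?_, ?_, ?_⟩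
    · have : 0 < min (r₁ - ρ₁) (ρ₂ - r₂) := lt_min (by linarith) (by linarith)
      linarith
    · linarith [min_le_left (r₁ - ρ₁) (ρ₂ - r₂)]
    · linarith [min_le_right (r₁ - ρ₁) (ρ₂ - r₂)]
  have hmpos : (0 : ℝ) < m := by exact_mod_cast hm
  have : Nonempty (Fin m) := ⟨⟨0, hm⟩⟩
  obtain ⟨V, χ, hVs, ⟨K, hK⟩, hχ01, hVi, hχne, hχ1⟩ := ob_V m d (1 - ρ₂ + τ) (1 - r₂ - 2 * τ)
    (ρ₁ + τ) (r₁ - 2 * τ) (by linarith) (by linarith) (by linarith) (by linarith)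
    (by linarith) (by linarith)
  set N : ℝ := (m : ℝ) + s * p with hN
  have hN0 : 0 < N := by positivity
  set κ : ℝ := 2 * τ / m with hκ
  have hκ0 : 0 < κ := by positivity
  obtain ⟨C1, hC1, hgag⟩ := ob_gag m ν hm N p (1 + K) κ hN0 hp hκ0 (by positivity)
  set M : ℝ := (m + 1) / τ with hM
  have hM0 : 0 < M := by positivity
  set c2 : ℝ≥0∞ := 2 * ENNReal.ofReal (M ^ m) with hc2
  have hc2t : c2 ≠ ⊤ := ENNReal.mul_ne_top (by simp) ENNReal.ofReal_ne_top
  refine ⟨C1 * c2 + c2, ENNReal.add_ne_top.2 ⟨ENNReal.mul_ne_top hC1 hc2t, hc2t⟩, ?_⟩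
  intro η hη u hu
  set Q3 := rect m d ((1 - r₁) * η) (r₂ * η) with hQ3
  set Q4 := rect m d ((1 - ρ₁) * η) (ρ₂ * η) with hQ4
  have hQ3m : MeasurableSet Q3 := (ob_rect_open _ _ _ _).measurableSet
  have hQ4m : MeasurableSet Q4 := (ob_rect_open _ _ _ _).measurableSet
  have hQ34 : Q3 ⊆ Q4 := by
    intro x hx i
    have ha : (1 - r₁) * η ≤ (1 - ρ₁) * η := by gcongr
    have hb : r₂ * η ≤ ρ₂ * η := by gcongr
    exact ⟨fun h => ((hx i).1 h).trans_le ha, fun h => ((hx i).2 h).trans_le hb⟩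
  set W : Eucl m → Eucl m := fun y => η • V (η⁻¹ • y) with hW
  have hWs : ContDiff ℝ (⊤ : ℕ∞) W :=
    (hVs.comp (contDiff_id.const_smul η⁻¹)).const_smul η
  have hWm : Measurable W := hWs.continuous.measurable
  have hWi : ∀ y i, W y i = if d ≤ (i : ℕ) then χ (η⁻¹ • y) * y i else 0 := by
    intro y i
    simp only [hW, PiLp.smul_apply, hVi, smul_eq_mul]
    split_ifs
    · field_simp
    · simp
  have hWL : ∀ x y, ‖W x - W y‖ ≤ K * ‖x - y‖ := by
    intro x y
    have := hK.norm_sub_le (η⁻¹ • x) (η⁻¹ • y)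
    rw [← smul_sub, norm_smul, norm_inv, Real.norm_of_nonneg hη.le] at this
    simp only [hW]
    rw [← smul_sub, norm_smul, Real.norm_of_nonneg hη.le]
    calc _ ≤ η * (K * (η⁻¹ * ‖x - y‖)) := by gcongr
      _ = _ := by field_simp
  set Z := ball (0 : Eucl m) (τ * η) with hZ
  set B := ball (0 : Eucl m) (M * (τ * η)) with hB
  have hZi : ∀ z ∈ Z, ∀ i, |z i| < τ * η := by
    intro z hz i
    rw [hZ, mem_ball_zero_iff] at hz
    exact (ob_coord_le m z i).trans_lt hz
  -- the map preserves rectangles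
  have hmaps : ∀ z ∈ Z, ∀ a b : ℝ, τ * η ≤ b → ∀ x ∈ rect m d a b,
      x - W (x + z) ∈ rect m d a b := by
    intro z hz a b hb x hx i
    constructor
    · intro h
      have : (x - W (x + z)) i = x i := by
        rw [PiLp.sub_apply, hWi, if_neg (not_le.2 h), sub_zero]
      rw [this]
      exact (hx i).1 h
    · intro h
      rw [PiLp.sub_apply, hWi, if_pos h, PiLp.add_apply]
      exact ob_convex_abs _ _ _ _ (hχ01 _).1 (hχ01 _).2 ((hx i).2 h) ((hZi z hz i).trans_le hb)
  have hτρ : τ * η ≤ ρ₂ * η := by gcongr; linarith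
  have hτr2 : τ * η ≤ r₂ * η := by gcongr; linarith
  have hτr1 : τ * η ≤ r₁ * η := by gcongr; linarith
  have hQ3norm : ∀ x ∈ Q3, ‖x‖ ≤ m * η := fun x hx =>
    ob_norm_le m d _ _ η hη.le (by nlinarith) (by nlinarith) x hx
  have hAB : ∀ z ∈ Z, ∀ x ∈ Q3, x + z ∈ B := by
    intro z hz x hx
    rw [hZ, mem_ball_zero_iff] at hz
    rw [hB, mem_ball_zero_iff]
    have e : M * (τ * η) = (m + 1) * η := by rw [hM]; field_simp
    rw [e]
    have hx' := hQ3norm x hx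
    have : τ * η < 1 * η := by gcongr; linarith
    linarith [norm_add_le x z]
  have hAD : ∀ z ∈ Z, ∀ x ∈ Q3, x - W (x + z) ∈ Q4 := fun z hz x hx =>
    hQ34 (hmaps z hz _ _ hτr2 x hx)
  have hG := obG_meas m ν N p Q4 u hu
  have hU : Measurable fun x => (‖u x‖₊ : ℝ≥0∞) ^ p := by fun_prop
  have av1 := ob_avg m W hWm Q3 B Q4 Z hQ3m measurableSet_ball hQ4m measurableSet_ball hAD hAB _ hG
  have av2 := ob_avg m W hWm Q3 B Q4 Z hQ3m measurableSet_ball hQ4m measurableSet_ball hAD hAB _ hU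
  have hmeasF : ∀ g : Eucl m → ℝ≥0∞, Measurable g →
      Measurable fun z => ∫⁻ x in Q3, g (x - W (x + z)) := by
    intro g hg
    apply Measurable.lintegral_prod_right' (f := fun w : Eucl m × Eucl m =>
      g (w.2 - W (w.2 + w.1)))
    apply hg.comp
    exact measurable_snd.sub (hWm.comp (measurable_snd.add measurable_fst))
  have hZ0 : volume Z ≠ 0 := (measure_ball_pos _ _ (by positivity)).ne'
  have hZt : volume Z ≠ ⊤ := measure_ball_lt_top.ne
  have hBZ : volume B = ENNReal.ofReal (M ^ m) * volume Z := by
    rw [hB, hZ, Measure.addHaar_ball_mul _ _ hM0.le, finrank_euclideanSpace_fin]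
  obtain ⟨z, hz, hz1, hz2⟩ := ob_select volume Z hZ0 hZt _ _ (hmeasF _ hG) (hmeasF _ hU) _ _ av1 av2
  have hcc : ∀ a : ℝ≥0∞, 2 / volume Z * (volume B * a) = c2 * a := by
    intro a
    rw [hBZ, hc2, div_eq_mul_inv]
    calc _ = 2 * ENNReal.ofReal (M ^ m) * ((volume Z)⁻¹ * volume Z) * a := by ring
      _ = _ := by rw [ENNReal.inv_mul_cancel hZ0 hZt, mul_one]
  rw [hcc] at hz1 hz2
  have hzi := hZi z hz
  set Φ : Eucl m → Eucl m := fun x => x - W (x + z) with hΦ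
  have hΦs : ContDiff ℝ (⊤ : ℕ∞) Φ := contDiff_id.sub (hWs.comp (contDiff_id.add contDiff_const))
  have hΦi : ∀ x i, Φ x i = x i - if d ≤ (i : ℕ) then χ (η⁻¹ • (x + z)) * (x i + z i) else 0 := by
    intro x i
    simp only [hΦ]
    rw [PiLp.sub_apply, hWi, PiLp.add_apply]
  have hsc : ∀ (x : Eucl m) (i : Fin m), |(η⁻¹ • (x + z)) i| = |x i + z i| / η := by
    intro x i
    rw [PiLp.smul_apply, smul_eq_mul, abs_mul, abs_inv, abs_of_pos hη, PiLp.add_apply]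
    field_simp
  refine ⟨Φ, hΦs.contDiffOn, fun x hx => hmaps z hz _ _ hτρ x hx, ?_, ?_, ?_,
    fun x hx => hmaps z hz _ _ hτr1 x hx, ?_, ?_⟩
  · intro x _ i hi
    rw [hΦi, if_neg (not_le.2 hi), sub_zero]
  · have hone : ∀ x ∈ rect m d ((1 - ρ₂) * η) (ρ₁ * η), χ (η⁻¹ • (x + z)) = 1 := by
      intro x hx
      apply hχ1
      intro i
      rw [hsc, div_lt_iff₀ hη, div_lt_iff₀ hη]
      have := abs_add_le (x i) (z i)
      constructor
      · intro h
        have := (hx i).1 h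
        linarith [hzi i]
      · intro h
        have := (hx i).2 h
        linarith [hzi i]
    intro x hx y hy hxy
    ext i
    rw [hΦi, hΦi, hone x hx, hone y hy]
    split_ifs with h
    · ring
    · rw [hxy i (not_le.1 h)]
  · have hcl : IsClosed {x : Eucl m | ∀ i : Fin m,
        |x i| ≤ if (i : ℕ) < d then (1 - r₂ - τ) * η else (r₁ - τ) * η} := by
      have : {x : Eucl m | ∀ i : Fin m,
        |x i| ≤ if (i : ℕ) < d then (1 - r₂ - τ) * η else (r₁ - τ) * η} =
        ⋂ i : Fin m, {x : Eucl m |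
          |x i| ≤ if (i : ℕ) < d then (1 - r₂ - τ) * η else (r₁ - τ) * η} := by
        ext x; simp
      rw [this]
      exact isClosed_iInter fun i => isClosed_le (by fun_prop) continuous_const
    have hτη : 0 < τ * η := by positivity
    refine (closure_minimal ?_ hcl).trans ?_
    · rintro x ⟨_, hx⟩ i
      have hc : χ (η⁻¹ • (x + z)) ≠ 0 := by
        intro hc
        apply hx
        ext j
        rw [hΦi, hc]
        simp
      have hr := hχne _ hc i
      rw [hsc, div_lt_iff₀ hη, div_lt_iff₀ hη] at hr
      have h5 : |x i| ≤ |x i + z i| + |z i| := by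
        have := abs_sub (x i + z i) (z i)
        simpa using this
      have := hzi i
      split_ifs with h
      · linarith [hr.1 h]
      · linarith [hr.2 (not_lt.1 h)]
    · intro x hx i
      have := hx i
      constructor
      · intro h
        rw [if_pos h] at this
        linarith
      · intro h
        rw [if_neg (not_lt.2 h)] at this
        linarith
  · have hb := hgag u hu Φ hΦs.continuous.measurable Q3 Q4 hQ3m ?_ ?_
    · have e : gagliardoPow m s p Q4 u = ∫⁻ x in Q4, obG m ν N p Q4 u x := rfl
      calc _ ≤ C1 * ∫⁻ x in Q3, obG m ν N p Q4 u (Φ x) := hb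
        _ ≤ C1 * (c2 * ∫⁻ x in Q4, obG m ν N p Q4 u x) := mul_le_mul_right hz1 _
        _ = C1 * c2 * gagliardoPow m s p Q4 u := by rw [e, mul_assoc C1]
        _ ≤ _ := mul_le_mul_left le_self_add _
    · intro x _ y _
      have e : Φ x - Φ y = (x - y) - (W (x + z) - W (y + z)) := by simp only [hΦ]; abel
      rw [e]
      have := hWL (x + z) (y + z)
      rw [add_sub_add_right_eq_sub] at this
      linarith [norm_sub_le (x - y) (W (x + z) - W (y + z))]
    · intro x hx y hy w hw i
      have hΦx : Φ x ∈ Q3 := hmaps z hz _ _ hτr2 x hx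
      rw [mem_ball, dist_eq_norm] at hw
      have hxy : ‖x - y‖ ≤ 2 * m * η := by
        linarith [norm_sub_le x y, hQ3norm x hx, hQ3norm y hy]
      have hk : κ * ‖x - y‖ ≤ 4 * τ * η := by
        calc κ * ‖x - y‖ ≤ κ * (2 * m * η) := by gcongr
          _ = _ := by rw [hκ]; field_simp; ring
      have hi := ob_coord_le m (w - Φ x) i
      rw [PiLp.sub_apply] at hi
      have h5 : |w i| ≤ |w i - Φ x i| + |Φ x i| := by
        have := abs_add_le (w i - Φ x i) (Φ x i)
        simpa using this
      have e1 : 4 * τ * η ≤ (r₁ - ρ₁) * η := by gcongr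
      have e2 : 4 * τ * η ≤ (ρ₂ - r₂) * η := by gcongr
      constructor
      · intro h
        have := (hΦx i).1 h
        linarith
      · intro h
        have := (hΦx i).2 h
        linarith
  · exact hz2.trans (mul_le_mul_left le_add_self _)

/-- **Opening construction (building block, case `0 < s < 1`).**
Let `0 < s < 1`, `1 ≤ p < ∞`, `0 < ρ̲ < r̲ < r̄ < ρ̄ < 1`, and set
`Q₁ = Q^d_{(1-ρ̄)η} × Q^{m-d}_{ρ̲η}`, `Q₂ = Q^d_{(1-r̄)η} × Q^{m-d}_{r̲η}`,
`Q₃ = Q^d_{(1-r̲)η} × Q^{m-d}_{r̄η}`, `Q₄ = Q^d_{(1-ρ̲)η} × Q^{m-d}_{ρ̄η}`.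
There is `C > 0` depending only on `m, s, p, ρ̲, r̲, r̄, ρ̄` such that for every `d < m`,
`η > 0`, and measurable `u : Q₄ → ℝ^ν` with `u ∈ L^p(Q₄)` and `|u|_{W^{s,p}(Q₄)} < ∞`,
there exists a smooth map `Φ : Q₄ → Q₄` (depending on `u`) which preserves the first `d`
coordinates, is constant on the slices `{x′} × Q^{m-d}_{ρ̲η}` over `Q^d_{(1-ρ̄)η}`, has
geometric support in `Q₂` and maps `Q₂` into itself, and satisfies
`|u ∘ Φ|_{W^{s,p}(Q₃)} ≤ C |u|_{W^{s,p}(Q₄)}` and `‖u ∘ Φ‖_{L^p(Q₃)} ≤ C ‖u‖_{L^p(Q₄)}`. -/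
theorem opening_block_fractional
    (m ν : ℕ) (hm : 1 ≤ m) (s p : ℝ) (hs0 : 0 < s) (hs1 : s < 1) (hp : 1 ≤ p)
    (ρ₁ r₁ r₂ ρ₂ : ℝ) (h0 : 0 < ρ₁) (h1 : ρ₁ < r₁) (h2 : r₁ < r₂) (h3 : r₂ < ρ₂)
    (h4 : ρ₂ < 1) :
    ∃ C : ℝ, 0 < C ∧
      ∀ (d : ℕ), d < m → ∀ (η : ℝ), 0 < η →
        ∀ u : Eucl m → Eucl ν, Measurable u →
          (∫⁻ x in rect m d ((1 - ρ₁) * η) (ρ₂ * η), (‖u x‖₊ : ℝ≥0∞) ^ p) < ⊤ →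
          gagliardoPow m s p (rect m d ((1 - ρ₁) * η) (ρ₂ * η)) u < ⊤ →
          ∃ Φ : Eucl m → Eucl m,
            ContDiffOn ℝ (⊤ : ℕ∞) Φ (rect m d ((1 - ρ₁) * η) (ρ₂ * η)) ∧
            MapsTo Φ (rect m d ((1 - ρ₁) * η) (ρ₂ * η)) (rect m d ((1 - ρ₁) * η) (ρ₂ * η)) ∧
            (∀ x ∈ rect m d ((1 - ρ₁) * η) (ρ₂ * η), ∀ i : Fin m, (i : ℕ) < d → Φ x i = x i) ∧
            (∀ x ∈ rect m d ((1 - ρ₂) * η) (ρ₁ * η), ∀ y ∈ rect m d ((1 - ρ₂) * η) (ρ₁ * η),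
              (∀ i : Fin m, (i : ℕ) < d → x i = y i) → Φ x = Φ y) ∧
            closure {x | x ∈ rect m d ((1 - ρ₁) * η) (ρ₂ * η) ∧ Φ x ≠ x}
              ⊆ rect m d ((1 - r₂) * η) (r₁ * η) ∧
            MapsTo Φ (rect m d ((1 - r₂) * η) (r₁ * η)) (rect m d ((1 - r₂) * η) (r₁ * η)) ∧
            gagliardoSeminorm m s p (rect m d ((1 - r₁) * η) (r₂ * η)) (fun x => u (Φ x))
              ≤ ENNReal.ofReal C *
                  gagliardoSeminorm m s p (rect m d ((1 - ρ₁) * η) (ρ₂ * η)) u ∧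
            eLpNorm (fun x => u (Φ x)) (ENNReal.ofReal p)
                (volume.restrict (rect m d ((1 - r₁) * η) (r₂ * η)))
              ≤ ENNReal.ofReal C *
                  eLpNorm u (ENNReal.ofReal p)
                    (volume.restrict (rect m d ((1 - ρ₁) * η) (ρ₂ * η))) := by
  have hd : ∀ d : ℕ, ∃ C : ℝ≥0∞, C ≠ ⊤ ∧ _ := fun d =>
    ob_dfixed m ν hm s p hs0 hp ρ₁ r₁ r₂ ρ₂ h0 h1 h2 h3 h4 d
  choose C hCt hC using hd
  have hp0 : 0 < p := by linarith
  set S : ℝ≥0∞ := ∑ d ∈ Finset.range m, C d with hS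
  have hSt : S ≠ ⊤ := (ENNReal.sum_ne_top).2 fun d _ => hCt d
  have hSp : S ^ (1 / p) ≠ ⊤ := ENNReal.rpow_ne_top_of_nonneg (by positivity) hSt
  refine ⟨(S ^ (1 / p)).toReal + 1, by positivity, ?_⟩
  intro d hdm η hη u hu _ _
  obtain ⟨Φ, a1, a2, a3, a4, a5, a6, a7, a8⟩ := hC d η hη u hu
  have hCS : C d ≤ S := Finset.single_le_sum (f := C) (fun _ _ => zero_le) (Finset.mem_range.2 hdm)
  have hSle : S ^ (1 / p) ≤ ENNReal.ofReal ((S ^ (1 / p)).toReal + 1) := by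
    rw [← ENNReal.ofReal_toReal hSp]
    apply ENNReal.ofReal_le_ofReal
    rw [ENNReal.ofReal_toReal hSp]
    linarith
  have root : ∀ a b : ℝ≥0∞, a ≤ C d * b →
      a ^ (1 / p) ≤ ENNReal.ofReal ((S ^ (1 / p)).toReal + 1) * b ^ (1 / p) := by
    intro a b hab
    calc a ^ (1 / p) ≤ (S * b) ^ (1 / p) := by
          apply ENNReal.rpow_le_rpow _ (by positivity)
          exact hab.trans (mul_le_mul_left hCS _)
      _ = S ^ (1 / p) * b ^ (1 / p) := ENNReal.mul_rpow_of_nonneg _ _ (by positivity)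
      _ ≤ _ := mul_le_mul_left hSle _
  refine ⟨Φ, a1, a2, a3, a4, a5, a6, root _ _ a7, ?_⟩
  have hpe0 : ENNReal.ofReal p ≠ 0 := by simpa using hp0
  rw [eLpNorm_eq_lintegral_rpow_enorm_toReal hpe0 ENNReal.ofReal_ne_top,
    eLpNorm_eq_lintegral_rpow_enorm_toReal hpe0 ENNReal.ofReal_ne_top,
    ENNReal.toReal_ofReal hp0.le]
  exact root _ _ a8
end
end

section
/- Let m ≥ 1, 0 < s < 1, 1 ≤ p < ∞, let Ω ⊂ ℝ^m be open, let φ be a mollifier on B^m_1, and let ψ ∈ C^∞(Ω) be a nonnegative function with ‖Dψ‖_{L^∞(Ω)} < 1. Then there is a constant C > 0 depending only on m, s and p such that for every measurable u : Ω → ℝ^ν with |u|_{W^{s,p}(Ω)} < ∞ and every open set ω ⊂ { x ∈ Ω : dist(x, ∂Ω) > ψ(x) }, one has |φ_ψ ∗ u|_{W^{s,p}(ω)} ≤ C (1 − ‖Dψ‖_{L^∞(ω)})^{−2/p} |u|_{W^{s,p}(Ω)}. -/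
open MeasureTheory Set Metric
open scoped ENNReal
noncomputable section

/-- `φ` is a mollifier: a smooth nonnegative radial function, compactly supported in the open
unit ball `B^m_1`, with integral `1`. -/
def IsMollifier (m : ℕ) (φ : Eucl m → ℝ) : Prop :=
  ContDiff ℝ (⊤ : ℕ∞) φ ∧ HasCompactSupport φ ∧ tsupport φ ⊆ Metric.ball 0 1 ∧
    (∀ x, 0 ≤ φ x) ∧ (∀ x y : Eucl m, ‖x‖ = ‖y‖ → φ x = φ y) ∧
    (∫ x in Metric.ball (0 : Eucl m) 1, φ x) = 1

open Function

/-- Difference of Bochner integrals is controlled without integrability assumptions. -/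
theorem aux_enorm_integral_sub_le {α E : Type*} [MeasurableSpace α] [NormedAddCommGroup E]
    [NormedSpace ℝ E] {μ : Measure α} {f g : α → E}
    (hf : AEStronglyMeasurable f μ) (hg : AEStronglyMeasurable g μ) :
    ‖(∫ z, f z ∂μ) - ∫ z, g z ∂μ‖ₑ ≤ ∫⁻ z, ‖f z - g z‖ₑ ∂μ := by
  by_cases h : Integrable (fun z => f z - g z) μ
  · by_cases hgi : Integrable g μ
    · have hfi : Integrable f μ := by
        have := h.add hgi
        refine this.congr (Filter.Eventually.of_forall fun z => ?_)
        simp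
      rw [← integral_sub hfi hgi]
      exact enorm_integral_le_lintegral_enorm _
    · have hfi : ¬ Integrable f μ := by
        intro hfi
        apply hgi
        have := hfi.sub h
        refine this.congr (Filter.Eventually.of_forall fun z => ?_)
        simp
      rw [integral_undef hfi, integral_undef hgi]
      simp
  · have : ∫⁻ z, ‖f z - g z‖ₑ ∂μ = ⊤ := by
      by_contra hne
      exact h ⟨hf.sub hg, lt_top_iff_ne_top.2 hne⟩
    rw [this]
    exact le_top

/-- Jensen's inequality for powers. -/
theorem aux_jensen {α : Type*} [MeasurableSpace α] (μ : Measure α) [IsProbabilityMeasure μ]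
    {p : ℝ} (hp : 1 ≤ p) {f : α → ℝ≥0∞} (hf : Measurable f) :
    (∫⁻ z, f z ∂μ) ^ p ≤ ∫⁻ z, f z ^ p ∂μ := by
  have h := eLpNorm'_le_eLpNorm'_of_exponent_le (f := f) one_pos hp μ
    hf.aestronglyMeasurable
  simp only [eLpNorm', enorm_eq_self, ENNReal.rpow_one, div_one] at h
  have h2 := ENNReal.rpow_le_rpow h (by linarith : (0:ℝ) ≤ p)
  rwa [← ENNReal.rpow_mul, one_div, inv_mul_cancel₀ (by linarith), ENNReal.rpow_one] at h2

/-- Points at distance less than the distance to the boundary stay in the set. -/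
theorem aux_mem_of_infEdist {m : ℕ} {Ω : Set (Eucl m)} (hΩ : IsOpen Ω) {x y : Eucl m}
    (hx : x ∈ Ω) (h : ENNReal.ofReal ‖y - x‖ < Metric.infEDist x (frontier Ω)) : y ∈ Ω := by
  by_contra hy
  have hpre : IsPreconnected (segment ℝ x y) := (convex_segment x y).isPreconnected
  obtain ⟨w, hw, hwf⟩ : (segment ℝ x y ∩ frontier Ω).Nonempty := by
    by_contra hne
    rw [not_nonempty_iff_eq_empty] at hne
    have hcov : segment ℝ x y ⊆ Ω ∪ (closure Ω)ᶜ := by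
      intro w hw
      by_cases hwc : w ∈ closure Ω
      · left
        by_contra hwΩ
        have : w ∈ segment ℝ x y ∩ frontier Ω := by
          refine ⟨hw, ?_⟩
          rw [hΩ.frontier_eq]
          exact ⟨hwc, hwΩ⟩
        rw [hne] at this
        exact this
      · right
        exact hwc
    have hyc : y ∈ (closure Ω)ᶜ := by
      rcases hcov (right_mem_segment ℝ x y) with h' | h'
      · exact absurd h' hy
      · exact h'
    obtain ⟨w, -, hw1, hw2⟩ := hpre Ω (closure Ω)ᶜ hΩ isClosed_closure.isOpen_compl hcov
      ⟨x, left_mem_segment ℝ x y, hx⟩ ⟨y, right_mem_segment ℝ x y, hyc⟩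
    exact hw2 (subset_closure hw1)
  have h1 : Metric.infEDist x (frontier Ω) ≤ edist x w := Metric.infEDist_le_edist_of_mem hwf
  have h2 : ‖w - x‖ ≤ ‖y - x‖ := by
    have := norm_sub_le_of_mem_segment hw
    simpa [norm_sub_rev] using this
  rw [edist_comm, edist_dist, dist_eq_norm] at h1
  exact absurd (h.trans_le (h1.trans (ENNReal.ofReal_le_ofReal h2))) (lt_irrefl _)

/-- `ψ` is nonexpansive on `ω`. -/
theorem aux_lip {m : ℕ} {Ω : Set (Eucl m)} (hΩ : IsOpen Ω) {ψ : Eucl m → ℝ}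
    (hd : ∀ x ∈ Ω, HasFDerivAt ψ (fderivWithin ℝ ψ Ω x) x) (h0 : ∀ x ∈ Ω, 0 ≤ ψ x)
    {KΩ : ℝ} (hK : KΩ < 1) (hb : ∀ x ∈ Ω, ‖fderivWithin ℝ ψ Ω x‖ ≤ KΩ)
    {x y : Eucl m} (hx : x ∈ Ω) (hy : y ∈ Ω)
    (hxd : ENNReal.ofReal (ψ x) < Metric.infEDist x (frontier Ω))
    (hyd : ENNReal.ofReal (ψ y) < Metric.infEDist y (frontier Ω)) :
    |ψ x - ψ y| ≤ ‖x - y‖ := by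
  have key : ∀ a b : Eucl m, a ∈ Ω → ENNReal.ofReal (ψ a) < Metric.infEDist a (frontier Ω) →
      ‖b - a‖ < ψ a → |ψ b - ψ a| ≤ ‖b - a‖ := by
    intro a b ha had hab
    have hsub : Metric.ball a (ψ a) ⊆ Ω := by
      intro w hw
      apply aux_mem_of_infEdist hΩ ha
      refine lt_of_le_of_lt (ENNReal.ofReal_le_ofReal ?_) had
      rw [← dist_eq_norm]
      exact (Metric.mem_ball.1 hw).le
    have := Convex.norm_image_sub_le_of_norm_hasFDerivWithin_le (𝕜 := ℝ) (f := ψ)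
      (s := Metric.ball a (ψ a)) (x := a) (y := b) (C := KΩ)
      (fun w hw => (hd w (hsub hw)).hasFDerivWithinAt) (fun w hw => hb w (hsub hw))
      (convex_ball a _)
      (Metric.mem_ball_self (lt_of_le_of_lt (norm_nonneg _) hab))
      (by rw [Metric.mem_ball, dist_eq_norm]; exact hab)
    rw [Real.norm_eq_abs] at this
    nlinarith [norm_nonneg (b - a)]
  rcases lt_or_ge ‖y - x‖ (ψ x) with h | h
  · have := key x y hx hxd h
    rwa [abs_sub_comm, norm_sub_rev]
  rcases lt_or_ge ‖x - y‖ (ψ y) with h' | h'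
  · exact key y x hy hyd h'
  rw [norm_sub_rev] at h
  rw [abs_le]
  constructor <;> linarith [h0 x hx, h0 y hy]

/-- Change of variables. -/
theorem aux_cov {m : ℕ} {Ω ω : Set (Eucl m)} (hω : MeasurableSet ω) {ψ : Eucl m → ℝ}
    {ψ' : Eucl m → (Eucl m →L[ℝ] ℝ)}
    (hd : ∀ x ∈ ω, HasFDerivAt ψ (ψ' x) x)
    {K : ℝ} (hK : K < 1) (hb : ∀ x ∈ ω, ‖ψ' x‖ ≤ K)
    {z : Eucl m} (hz : ‖z‖ < 1)
    (hlip : ∀ x ∈ ω, ∀ y ∈ ω, |ψ x - ψ y| ≤ ‖x - y‖)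
    (hmaps : ∀ x ∈ ω, x + ψ x • z ∈ Ω) (G : Eucl m → ℝ≥0∞) :
    ∫⁻ x in ω, G (x + ψ x • z) ≤ ENNReal.ofReal (1 - K)⁻¹ * ∫⁻ x in Ω, G x := by
  have hinj : InjOn (fun x => x + ψ x • z) ω := by
    intro x hx y hy hxy
    have h1 : x - y = (ψ y - ψ x) • z := by
      have : x + ψ x • z = y + ψ y • z := hxy
      rw [sub_smul, sub_eq_sub_iff_add_eq_add]
      rw [this]; abel
    have h2 : ‖x - y‖ ≤ ‖x - y‖ * ‖z‖ := by
      calc ‖x - y‖ = |ψ y - ψ x| * ‖z‖ := by rw [h1, norm_smul, Real.norm_eq_abs]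
        _ ≤ ‖x - y‖ * ‖z‖ := by
          rw [abs_sub_comm]
          exact mul_le_mul_of_nonneg_right (hlip x hx y hy) (norm_nonneg _)
    have h3 : ‖x - y‖ = 0 := by nlinarith [norm_nonneg (x - y)]
    exact sub_eq_zero.1 (norm_eq_zero.1 h3)
  have hder : ∀ x ∈ ω, HasFDerivWithinAt (fun x => x + ψ x • z)
      (ContinuousLinearMap.id ℝ (Eucl m) + (ψ' x).smulRight z) ω x := by
    intro x hx
    exact ((hasFDerivAt_id x).add ((hd x hx).smul_const z)).hasFDerivWithinAt
  have hdet : ∀ x, (ContinuousLinearMap.id ℝ (Eucl m) + (ψ' x).smulRight z).det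
      = 1 + ψ' x z := by
    intro x
    exact LinearMap.transvection.det (ψ' x : Eucl m →ₗ[ℝ] ℝ) z
  have hpos : 0 < 1 - K := by linarith
  have himg := lintegral_image_eq_lintegral_abs_det_fderiv_mul volume hω hder hinj G
  have hle : ∫⁻ x in ω, G (x + ψ x • z) ≤
      ENNReal.ofReal (1 - K)⁻¹ * ∫⁻ x in (fun x => x + ψ x • z) '' ω, G x := by
    rw [himg, ← lintegral_const_mul' _ _ ENNReal.ofReal_ne_top]
    refine setLIntegral_mono' hω fun x hx => ?_
    rw [hdet, ← mul_assoc, ← ENNReal.ofReal_mul (inv_nonneg.2 hpos.le)]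
    have h1 : |ψ' x z| ≤ K := by
      have := (ψ' x).le_opNorm z
      rw [Real.norm_eq_abs] at this
      have h2 := hb x hx
      nlinarith [norm_nonneg z, norm_nonneg (ψ' x)]
    have h3 : 1 - K ≤ |1 + ψ' x z| := by
      refine le_trans ?_ (le_abs_self _)
      linarith [neg_le_of_abs_le h1]
    have h4 : 1 ≤ (1 - K)⁻¹ * |1 + ψ' x z| := by
      have h5 := mul_le_mul_of_nonneg_left h3 (inv_nonneg.2 hpos.le)
      rwa [inv_mul_cancel₀ hpos.ne'] at h5
    calc G (x + ψ x • z) = 1 * G (x + ψ x • z) := (one_mul _).symm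
      _ ≤ _ := mul_le_mul_left (ENNReal.one_le_ofReal.2 h4) _
  refine hle.trans ?_
  gcongr
  rintro _ ⟨x, hx, rfl⟩
  exact hmaps x hx

theorem aux_pointwise {q : ℝ} (hq : 0 ≤ q) {a r R : ℝ≥0∞} (h : R ≤ 2 * r) :
    a / r ^ q ≤ 2 ^ q * (a / R ^ q) := by
  have h2 : R ^ q ≤ 2 ^ q * r ^ q := by
    rw [← ENNReal.mul_rpow_of_nonneg _ _ hq]
    exact ENNReal.rpow_le_rpow h hq
  have hc0 : (2 : ℝ≥0∞) ^ q ≠ 0 := by simp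
  have hct : (2 : ℝ≥0∞) ^ q ≠ ⊤ := by simp
  have h3 : (r ^ q)⁻¹ ≤ 2 ^ q * (R ^ q)⁻¹ := by
    calc (r ^ q)⁻¹ = 2 ^ q * (2 ^ q * r ^ q)⁻¹ := by
          rw [ENNReal.mul_inv (Or.inl hc0) (Or.inl hct), ← mul_assoc,
            ENNReal.mul_inv_cancel hc0 hct, one_mul]
      _ ≤ _ := by gcongr
  rw [div_eq_mul_inv, div_eq_mul_inv, mul_left_comm]
  gcongr

/-- Core estimate for averages of `u` along the maps `x ↦ x + ψ x • z`. -/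
theorem aux_core {m ν : ℕ} {Ω ω : Set (Eucl m)} {q p : ℝ} (hq : 0 ≤ q) (hp : 1 ≤ p)
    (hω : MeasurableSet ω) {ψ : Eucl m → ℝ}
    {ψ' : Eucl m → (Eucl m →L[ℝ] ℝ)}
    (hd : ∀ x ∈ ω, HasFDerivAt ψ (ψ' x) x)
    {K : ℝ} (hK : K < 1) (hb : ∀ x ∈ ω, ‖ψ' x‖ ≤ K)
    (hlip : ∀ x ∈ ω, ∀ y ∈ ω, |ψ x - ψ y| ≤ ‖x - y‖)
    (hmaps : ∀ z : Eucl m, ‖z‖ < 1 → ∀ x ∈ ω, x + ψ x • z ∈ Ω)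
    {u : Eucl m → Eucl ν} (hu : Measurable u)
    (μ : Measure (Eucl m)) [IsProbabilityMeasure μ] (hball : ∀ᵐ z ∂μ, ‖z‖ < 1) :
    ∫⁻ x in ω, ∫⁻ y in ω,
      ‖(∫ z, u (x + ψ x • z) ∂μ) - ∫ z, u (y + ψ y • z) ∂μ‖ₑ ^ p / ‖x - y‖ₑ ^ q
    ≤ 2 ^ q * (ENNReal.ofReal (1 - K)⁻¹ * (ENNReal.ofReal (1 - K)⁻¹ *
      ∫⁻ x in Ω, ∫⁻ y in Ω, ‖u x - u y‖ₑ ^ p / ‖x - y‖ₑ ^ q)) := by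
  set F : Eucl m → Eucl m → ℝ≥0∞ := fun x y => ‖u x - u y‖ₑ ^ p / ‖x - y‖ₑ ^ q with hF
  have hFm : Measurable (fun w : Eucl m × Eucl m => F w.1 w.2) := by
    simp only [hF]
    fun_prop
  have hψ0 : Measurable (ω.indicator ψ) := by
    have hc : ContinuousOn ψ ω := fun x hx => (hd x hx).continuousAt.continuousWithinAt
    classical
    have := hc.measurable_piecewise (continuousOn_const (c := (0:ℝ)) (s := ωᶜ)) hω
    exact Set.piecewise_eq_indicator (s := ω) (f := ψ) ▸ this
  set η := ω.indicator ψ with hη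
  have hηe : ∀ x ∈ ω, η x = ψ x := fun x hx => Set.indicator_of_mem hx ψ
  have hHm : Measurable (fun w : (Eucl m × Eucl m) × Eucl m =>
      F (w.1.1 + η w.1.1 • w.2) (w.1.2 + η w.1.2 • w.2)) := by
    refine hFm.comp (g := fun w : Eucl m × Eucl m => F w.1 w.2)
      (f := fun w : (Eucl m × Eucl m) × Eucl m =>
        ((w.1.1 + η w.1.1 • w.2), (w.1.2 + η w.1.2 • w.2))) ?_
    fun_prop
  have hpt : ∀ x ∈ ω, ∀ y ∈ ω,
      ‖(∫ z, u (x + ψ x • z) ∂μ) - ∫ z, u (y + ψ y • z) ∂μ‖ₑ ^ p / ‖x - y‖ₑ ^ q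
      ≤ 2 ^ q * ∫⁻ z, F (x + η x • z) (y + η y • z) ∂μ := by
    intro x hx y hy
    rw [hηe x hx, hηe y hy]
    have hmx : Measurable fun z : Eucl m => u (x + ψ x • z) := by fun_prop
    have hmy : Measurable fun z : Eucl m => u (y + ψ y • z) := by fun_prop
    have h1 := aux_enorm_integral_sub_le (μ := μ) hmx.aestronglyMeasurable
      hmy.aestronglyMeasurable
    have h2 := (ENNReal.rpow_le_rpow h1 (by linarith : (0:ℝ) ≤ p)).trans
      (aux_jensen μ hp (by fun_prop))
    calc _ ≤ (∫⁻ z, ‖u (x + ψ x • z) - u (y + ψ y • z)‖ₑ ^ p ∂μ) / ‖x - y‖ₑ ^ q := by gcongr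
      _ = ∫⁻ z, ‖u (x + ψ x • z) - u (y + ψ y • z)‖ₑ ^ p / ‖x - y‖ₑ ^ q ∂μ := by
        simp only [div_eq_mul_inv]
        rw [lintegral_mul_const]
        fun_prop
      _ ≤ ∫⁻ z, 2 ^ q * F (x + ψ x • z) (y + ψ y • z) ∂μ := by
        refine lintegral_mono_ae ?_
        filter_upwards [hball] with z hz
        apply aux_pointwise hq
        have h3 : ‖(x + ψ x • z) - (y + ψ y • z)‖ ≤ 2 * ‖x - y‖ := by
          have h4 : (x + ψ x • z) - (y + ψ y • z) = (x - y) + (ψ x - ψ y) • z := by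
            rw [sub_smul]; abel
          rw [h4]
          refine (norm_add_le _ _).trans ?_
          rw [norm_smul, Real.norm_eq_abs]
          nlinarith [hlip x hx y hy, abs_nonneg (ψ x - ψ y), norm_nonneg z]
        have h5 := ENNReal.ofReal_le_ofReal h3
        rw [ENNReal.ofReal_mul (by norm_num), ofReal_norm, ofReal_norm,
          ENNReal.ofReal_ofNat] at h5
        exact h5
      _ = _ := by
        rw [lintegral_const_mul']
        simp
  have h2t : (2 : ℝ≥0∞) ^ q ≠ ⊤ := by simp
  calc _ ≤ ∫⁻ x in ω, ∫⁻ y in ω, 2 ^ q * ∫⁻ z, F (x + η x • z) (y + η y • z) ∂μ :=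
        setLIntegral_mono' hω fun x hx => setLIntegral_mono' hω fun y hy => hpt x hx y hy
    _ = 2 ^ q * ∫⁻ x in ω, ∫⁻ y in ω, ∫⁻ z, F (x + η x • z) (y + η y • z) ∂μ := by
        simp only [lintegral_const_mul' _ _ h2t]
    _ = 2 ^ q * ∫⁻ x in ω, ∫⁻ z, (∫⁻ y in ω, F (x + η x • z) (y + η y • z)) ∂μ := by
        congr 1
        refine lintegral_congr fun x => ?_
        apply lintegral_lintegral_swap
        refine Measurable.aemeasurable ?_
        exact hHm.comp (f := fun w : Eucl m × Eucl m => ((x, w.1), w.2)) (by fun_prop)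
    _ = 2 ^ q * ∫⁻ z, (∫⁻ x in ω, ∫⁻ y in ω, F (x + η x • z) (y + η y • z)) ∂μ := by
        congr 1
        apply lintegral_lintegral_swap
        refine Measurable.aemeasurable ?_
        have := hHm.comp (f := fun w : (Eucl m × Eucl m) × Eucl m => ((w.1.1, w.2), w.1.2))
          (by fun_prop)
        exact this.lintegral_prod_right'
    _ ≤ 2 ^ q * ∫⁻ z, ENNReal.ofReal (1 - K)⁻¹ * (ENNReal.ofReal (1 - K)⁻¹ *
          ∫⁻ x in Ω, ∫⁻ y in Ω, F x y) ∂μ := by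
        refine mul_le_mul_right ?_ _
        refine lintegral_mono_ae ?_
        filter_upwards [hball] with z hz
        calc _ = ∫⁻ x in ω, ∫⁻ y in ω, F (x + ψ x • z) (y + ψ y • z) := by
              refine setLIntegral_congr_fun hω fun x hx => ?_
              refine setLIntegral_congr_fun hω fun y hy => ?_
              simp only [hηe x hx, hηe y hy]
          _ ≤ ∫⁻ x in ω, ENNReal.ofReal (1 - K)⁻¹ * ∫⁻ y in Ω, F (x + ψ x • z) y :=
              lintegral_mono fun x =>
                aux_cov hω hd hK hb hz hlip (hmaps z hz) (fun y => F (x + ψ x • z) y)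
          _ ≤ ENNReal.ofReal (1 - K)⁻¹ *
                ∫⁻ x in Ω, ENNReal.ofReal (1 - K)⁻¹ * ∫⁻ y in Ω, F x y :=
              aux_cov hω hd hK hb hz hlip (hmaps z hz)
                (fun x => ENNReal.ofReal (1 - K)⁻¹ * ∫⁻ y in Ω, F x y)
          _ = _ := by rw [lintegral_const_mul' _ _ ENNReal.ofReal_ne_top]
    _ = _ := by rw [lintegral_const, measure_univ, mul_one]

/-- **Gagliardo seminorm bound for adaptive smoothing, `0 < s < 1`.**
There is `C > 0` depending only on `m`, `s` and `p` such that: for every open `Ω ⊆ ℝ^m`,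
every mollifier `φ`, every nonnegative `ψ ∈ C^∞(Ω)` with `‖Dψ‖_{L^∞(Ω)} < 1`, every
measurable `u : Ω → ℝ^ν` with `|u|_{W^{s,p}(Ω)} < ∞`, every open
`ω ⊆ {x ∈ Ω : dist(x, ∂Ω) > ψ(x)}`, and every `K < 1` with `‖Dψ‖_{L^∞(ω)} ≤ K`,
`|φ_ψ ∗ u|_{W^{s,p}(ω)} ≤ C (1 - K)^{-2/p} |u|_{W^{s,p}(Ω)}`. -/
theorem adaptive_smoothing_gagliardo_bound
    (m ν : ℕ) (hm : 1 ≤ m) (s p : ℝ) (hs0 : 0 < s) (hs1 : s < 1) (hp : 1 ≤ p) :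
    ∃ C : ℝ, 0 < C ∧
      ∀ (Ω : Set (Eucl m)), IsOpen Ω →
      ∀ φ : Eucl m → ℝ, IsMollifier m φ →
      ∀ ψ : Eucl m → ℝ, ContDiffOn ℝ (⊤ : ℕ∞) ψ Ω → (∀ x ∈ Ω, 0 ≤ ψ x) →
      ∀ KΩ : ℝ, KΩ < 1 → (∀ x ∈ Ω, ‖fderivWithin ℝ ψ Ω x‖ ≤ KΩ) →
      ∀ u : Eucl m → Eucl ν, Measurable u → gagliardoPow m s p Ω u < ⊤ →
      ∀ ω : Set (Eucl m), IsOpen ω →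
        ω ⊆ {x ∈ Ω | ENNReal.ofReal (ψ x) < EMetric.infEdist x (frontier Ω)} →
      ∀ K : ℝ, 0 ≤ K → K < 1 → (∀ x ∈ ω, ‖fderivWithin ℝ ψ Ω x‖ ≤ K) →
        gagliardoSeminorm m s p ω
            (fun x => ∫ z in Metric.ball (0 : Eucl m) 1, φ z • u (x + ψ x • z))
          ≤ ENNReal.ofReal (C * (1 - K) ^ (-(2 / p))) * gagliardoSeminorm m s p Ω u := by
  have hp0 : 0 < p := by linarith
  set q : ℝ := (m : ℝ) + s * p with hq
  have hq0 : 0 ≤ q := by positivity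
  refine ⟨(2 : ℝ) ^ (q / p), by positivity, ?_⟩
  intro Ω hΩ φ hφ ψ hψ hψ0 KΩ hKΩ hbΩ u hu _ ω hω hsub K hK0 hK1 hbK
  obtain ⟨hφs, -, -, hφ0, -, hφ1⟩ := hφ
  have hωΩ : ∀ x ∈ ω, x ∈ Ω := fun x hx => (hsub hx).1
  have hωd : ∀ x ∈ ω, ENNReal.ofReal (ψ x) < Metric.infEDist x (frontier Ω) :=
    fun x hx => (hsub hx).2
  have hd : ∀ x ∈ Ω, HasFDerivAt ψ (fderivWithin ℝ ψ Ω x) x := by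
    intro x hx
    have h1 : DifferentiableWithinAt ℝ ψ Ω x := (hψ.differentiableOn (by simp)) x hx
    exact h1.hasFDerivWithinAt.hasFDerivAt (hΩ.mem_nhds hx)
  have hlip : ∀ x ∈ ω, ∀ y ∈ ω, |ψ x - ψ y| ≤ ‖x - y‖ := fun x hx y hy =>
    aux_lip hΩ hd hψ0 hKΩ hbΩ (hωΩ x hx) (hωΩ y hy) (hωd x hx) (hωd y hy)
  have hmaps : ∀ z : Eucl m, ‖z‖ < 1 → ∀ x ∈ ω, x + ψ x • z ∈ Ω := by
    intro z hz x hx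
    apply aux_mem_of_infEdist hΩ (hωΩ x hx)
    refine lt_of_le_of_lt (ENNReal.ofReal_le_ofReal ?_) (hωd x hx)
    rw [add_sub_cancel_left, norm_smul, Real.norm_eq_abs, abs_of_nonneg (hψ0 x (hωΩ x hx))]
    nlinarith [hψ0 x (hωΩ x hx)]
  have hφc : Continuous φ := hφs.continuous
  -- the probability measure given by the mollifier
  set μ : Measure (Eucl m) :=
    (volume.restrict (Metric.ball (0 : Eucl m) 1)).withDensity (fun z => ENNReal.ofReal (φ z))
    with hμ
  have hφm : Measurable (fun z => ENNReal.ofReal (φ z)) := hφc.measurable.ennreal_ofReal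
  have hφi : Integrable φ (volume.restrict (Metric.ball (0 : Eucl m) 1)) := by
    by_contra hcon
    rw [integral_undef hcon] at hφ1
    exact zero_ne_one hφ1
  have hprob : IsProbabilityMeasure μ := by
    constructor
    rw [hμ, withDensity_apply _ MeasurableSet.univ, Measure.restrict_univ,
      ← ofReal_integral_eq_lintegral_ofReal hφi (Filter.Eventually.of_forall hφ0), hφ1,
      ENNReal.ofReal_one]
  have hball : ∀ᵐ z ∂μ, ‖z‖ < 1 := by
    apply (withDensity_absolutelyContinuous _ _).ae_le
    filter_upwards [ae_restrict_mem measurableSet_ball] with z hz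
    simpa using hz
  have hint : ∀ f : Eucl m → Eucl ν,
      (∫ z in Metric.ball (0 : Eucl m) 1, φ z • f z) = ∫ z, f z ∂μ := by
    intro f
    rw [hμ, integral_withDensity_eq_integral_toReal_smul hφm
      (Filter.Eventually.of_forall fun z => ENNReal.ofReal_lt_top)]
    simp [ENNReal.toReal_ofReal, hφ0]
  have hcore := aux_core (ψ' := fderivWithin ℝ ψ Ω) (Ω := Ω) hq0 hp hω.measurableSet
    (fun x hx => hd x (hωΩ x hx)) hK1 hbK hlip hmaps hu μ hball
  simp only [hint]
  have hcore' : gagliardoPow m s p ω (fun x => ∫ z, u (x + ψ x • z) ∂μ) ≤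
      2 ^ q * (ENNReal.ofReal (1 - K)⁻¹ * (ENNReal.ofReal (1 - K)⁻¹ *
        gagliardoPow m s p Ω u)) := hcore
  have hpos : 0 < 1 - K := by linarith
  unfold gagliardoSeminorm
  have hp' : 0 ≤ 1 / p := by positivity
  refine (ENNReal.rpow_le_rpow hcore' hp').trans ?_
  rw [ENNReal.mul_rpow_of_nonneg _ _ hp', ENNReal.mul_rpow_of_nonneg _ _ hp',
    ENNReal.mul_rpow_of_nonneg _ _ hp', ← ENNReal.rpow_mul, ← mul_assoc, ← mul_assoc]
  refine mul_le_mul_left (le_of_eq ?_) _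
  rw [ENNReal.ofReal_rpow_of_pos (by positivity), ENNReal.ofReal_mul (by positivity),
    ← ENNReal.ofReal_rpow_of_pos (by norm_num : (0:ℝ) < 2), mul_assoc,
    ← ENNReal.ofReal_mul (by positivity)]
  congr 1
  · rw [ENNReal.ofReal_ofNat, mul_one_div]
  · congr 1
    rw [Real.inv_rpow hpos.le, ← Real.rpow_neg hpos.le, ← Real.rpow_add hpos]
    congr 1
    ring
end
end

section
/- Let m ≥ 1, 0 < s < 1, 1 ≤ p < ∞, d ∈ {1,…,m} with d > sp, η > 0 and 0 < ρ̲ < ρ < ρ̄ < 1. Set Q₁ = Q^d_{(1−ρ̄)η} × Q^{m−d}_{ρ̲η}, Q₂ = Q^d_{(1−ρ)η} × Q^{m−d}_{ρ̲η}, Q₃ = Q^d_{(1−ρ)η} × Q^{m−d}_{ρη} and T = {0}^d × Q̄^{m−d}_{ρη}. Then there exists a smooth injective map Φ : ℝ^m \ T → ℝ^m with Supp Φ ⊂ Q₃, Φ(Q₂ \ T) ⊂ Q₂ \ Q₁ and Φ(Q₃ \ T) ⊂ Q₃, with the following property: for all c, c′ > 0 there is a constant C > 0, depending only on m, s, p,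 c, c′, ρ̲, ρ, ρ̄, such that for every measurable set ω with Q₃ ⊂ ω ⊂ B^m_{cη} satisfying |B^m_λ(z) ∩ ω| ≥ c′ λ^m for every z ∈ ω and 0 < λ ≤ (1/2) diam ω, and every measurable u : ω → ℝ^ν, the map u ∘ Φ (defined a.e. on ω, since T has measure zero) satisfies |u ∘ Φ|_{W^{s,p}(ω)} ≤ C |u|_{W^{s,p}(ω)} and ‖u ∘ Φ‖_{L^p(ω)} ≤ C ‖u‖_{L^p(ω)}. -/
open MeasureTheory Set Metric
open scoped ENNReal
noncomputable section

/-- The singular set `T = {0}^d × Q̄^{m-d}_b`. -/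
def dualPiece (m d : ℕ) (b : ℝ) : Set (Eucl m) :=
  {x : Eucl m | (∀ i : Fin m, (i : ℕ) < d → x i = 0) ∧ ∀ i : Fin m, d ≤ (i : ℕ) → |x i| ≤ b}


/-- Tail estimate for the kernel `|y|^{-(m+a)}`. -/
lemma tail_bound (m : ℕ) (a : ℝ) (ha : 0 < a) :
    ∃ K : ℝ≥0∞, K ≠ ⊤ ∧ ∀ t : ℝ, 0 < t → ∀ x : Eucl m,
      ∫⁻ y, (if t ≤ ‖x - y‖ then ENNReal.ofReal (‖x - y‖ ^ (-((m : ℝ) + a))) else 0)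
        ≤ K * ENNReal.ofReal (t ^ (-a)) := by
  set I : ℝ≥0∞ := ∫⁻ y : Eucl m, ENNReal.ofReal ((1 + ‖y‖) ^ (-((m : ℝ) + a))) with hI
  have hIfin : I < ⊤ := by
    apply finite_integral_one_add_norm
    simp; exact ha
  refine ⟨ENNReal.ofReal (2 ^ ((m : ℝ) + a)) * I, ENNReal.mul_ne_top (by simp) hIfin.ne, ?_⟩
  intro t ht x
  have htr : ∫⁻ y, (if t ≤ ‖x - y‖ then ENNReal.ofReal (‖x - y‖ ^ (-((m : ℝ) + a))) else 0)
      = ∫⁻ y : Eucl m, (if t ≤ ‖y‖ then ENNReal.ofReal (‖y‖ ^ (-((m : ℝ) + a))) else 0) :=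
    lintegral_sub_left_eq_self
      (fun y : Eucl m => (if t ≤ ‖y‖ then ENNReal.ofReal (‖y‖ ^ (-((m : ℝ) + a))) else 0)) x
  rw [htr]
  have hma : 0 < (m : ℝ) + a := by positivity
  have hpt : ∀ y : Eucl m, (if t ≤ ‖y‖ then ENNReal.ofReal (‖y‖ ^ (-((m : ℝ) + a))) else 0)
      ≤ ENNReal.ofReal ((2 / t) ^ ((m : ℝ) + a)) *
        ENNReal.ofReal ((1 + ‖t⁻¹ • y‖) ^ (-((m : ℝ) + a))) := by
    intro y
    split_ifs with h
    · rw [← ENNReal.ofReal_mul (by positivity)]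
      apply ENNReal.ofReal_le_ofReal
      have e1 : (2 / t) ^ ((m : ℝ) + a) = (t / 2) ^ (-((m : ℝ) + a)) := by
        rw [Real.rpow_neg (by positivity), ← Real.inv_rpow (by positivity), inv_div]
      rw [e1, ← Real.mul_rpow (by positivity) (by positivity)]
      apply Real.rpow_le_rpow_of_nonpos (by positivity)
      · rw [norm_smul, norm_inv, Real.norm_of_nonneg ht.le]
        have : t / 2 * (1 + t⁻¹ * ‖y‖) = (t + ‖y‖) / 2 := by field_simp
        linarith
      · linarith
    · exact zero_le
  have hmeas : Measurable fun y : Eucl m => ENNReal.ofReal ((1 + ‖y‖) ^ (-((m : ℝ) + a))) := by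
    fun_prop
  calc _ ≤ ∫⁻ y : Eucl m, ENNReal.ofReal ((2 / t) ^ ((m : ℝ) + a)) *
        ENNReal.ofReal ((1 + ‖t⁻¹ • y‖) ^ (-((m : ℝ) + a))) := lintegral_mono hpt
    _ = ENNReal.ofReal ((2 / t) ^ ((m : ℝ) + a)) *
        ∫⁻ y : Eucl m, ENNReal.ofReal ((1 + ‖t⁻¹ • y‖) ^ (-((m : ℝ) + a))) := by
        rw [lintegral_const_mul]; fun_prop
    _ = ENNReal.ofReal ((2 / t) ^ ((m : ℝ) + a)) * (ENNReal.ofReal (t ^ m) * I) := by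
        congr 1
        have h := lintegral_map (μ := (volume : Measure (Eucl m))) hmeas
          (measurable_const_smul (t⁻¹) : Measurable fun y : Eucl m => t⁻¹ • y)
        rw [← h, Measure.map_addHaar_smul _ (inv_ne_zero ht.ne'), lintegral_smul_measure]
        simp [abs_of_pos ht, hI]
    _ = ENNReal.ofReal (2 ^ ((m : ℝ) + a)) * I * ENNReal.ofReal (t ^ (-a)) := by
        have : (2 / t) ^ ((m : ℝ) + a) * t ^ m = 2 ^ ((m : ℝ) + a) * t ^ (-a) := by
          rw [Real.div_rpow (by positivity) ht.le, Real.rpow_add ht, Real.rpow_neg ht.le,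
            Real.rpow_natCast]
          field_simp
        rw [← mul_assoc, ← ENNReal.ofReal_mul (by positivity), this,
          ENNReal.ofReal_mul (by positivity)]
        ring
    _ ≤ _ := le_rfl

/-- The three-point kernel. -/
def kerH {m ν : ℕ} (a p : ℝ) (Φ : Eucl m → Eucl m) (u : Eucl m → Eucl ν)
    (x y z : Eucl m) : ℝ≥0∞ :=
  if ‖Φ x - z‖ ≤ 2 * ‖Φ x - Φ y‖ then
    (‖u (Φ x) - u z‖₊ : ℝ≥0∞) ^ p *
      (((‖Φ x - Φ y‖₊ : ℝ≥0∞) ^ m)⁻¹ * ((‖x - y‖₊ : ℝ≥0∞) ^ ((m : ℝ) + a))⁻¹)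
  else 0

lemma kerH_meas {m ν : ℕ} (a p : ℝ) {Φ : Eucl m → Eucl m} {u : Eucl m → Eucl ν}
    (hΦ : Measurable Φ) (hu : Measurable u) {β : Type*} [MeasurableSpace β]
    {f g h : β → Eucl m} (hf : Measurable f) (hg : Measurable g) (hh : Measurable h) :
    Measurable (fun b => kerH a p Φ u (f b) (g b) (h b)) := by
  unfold kerH
  refine Measurable.ite (measurableSet_le (by fun_prop) (by fun_prop)) ?_ measurable_const
  fun_prop

lemma kerH_pointwise {m ν : ℕ} (a p : ℝ) (hp : 1 ≤ p) (c' : ℝ) (hc' : 0 < c')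
    {Φ : Eucl m → Eucl m} {u : Eucl m → Eucl ν} (hΦ : Measurable Φ) (hu : Measurable u)
    {ω : Set (Eucl m)}
    (hω : ∀ z ∈ ω, ∀ lam : ℝ, 0 < lam → 2 * ENNReal.ofReal lam ≤ EMetric.diam ω →
              ENNReal.ofReal (c' * lam ^ m) ≤ volume (Metric.ball z lam ∩ ω))
    {x y : Eucl m} (hx : Φ x ∈ ω) (hy : Φ y ∈ ω) :
    (‖u (Φ x) - u (Φ y)‖₊ : ℝ≥0∞) ^ p / (‖x - y‖₊ : ℝ≥0∞) ^ ((m : ℝ) + a) ≤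
      ENNReal.ofReal (2 ^ (p - 1) * 2 ^ m / c') *
        ((∫⁻ z in ω, kerH a p Φ u x y z) + ∫⁻ z in ω, kerH a p Φ u y x z) := by
  have hp0 : 0 < p := by linarith
  by_cases hxy : Φ x = Φ y
  · rw [hxy]; simp [ENNReal.zero_rpow_of_pos hp0]
  set l : ℝ := ‖Φ x - Φ y‖ with hl
  have hl0 : 0 < l := norm_pos_iff.2 (sub_ne_zero.2 hxy)
  have hvol := hω _ hx (l / 2) (by positivity) (by
    have := EMetric.edist_le_diam_of_mem hx hy
    refine le_trans ?_ this
    rw [edist_dist, dist_eq_norm, ← hl]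
    rw [show (2 : ℝ≥0∞) = ENNReal.ofReal 2 by simp, ← ENNReal.ofReal_mul (by norm_num)]
    apply ENNReal.ofReal_le_ofReal; linarith)
  set E := Metric.ball (Φ x) (l / 2) ∩ ω with hE
  set W : ℝ≥0∞ := (‖u (Φ x) - u (Φ y)‖₊ : ℝ≥0∞) ^ p with hW
  set k : ℝ≥0∞ := (((‖Φ x - Φ y‖₊ : ℝ≥0∞) ^ m)⁻¹ * ((‖x - y‖₊ : ℝ≥0∞) ^ ((m : ℝ) + a))⁻¹) with hk
  have hpt : ∀ z ∈ Metric.ball (Φ x) (l / 2), W * k ≤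
      ENNReal.ofReal (2 ^ (p - 1)) * (kerH a p Φ u x y z + kerH a p Φ u y x z) := by
    intro z hz
    rw [Metric.mem_ball, dist_eq_norm, norm_sub_rev] at hz
    have c1 : ‖Φ x - z‖ ≤ 2 * ‖Φ x - Φ y‖ := by rw [← hl]; linarith
    have c2 : ‖Φ y - z‖ ≤ 2 * ‖Φ y - Φ x‖ := by
      rw [norm_sub_rev (Φ y) (Φ x), ← hl]
      have : Φ y - z = (Φ x - z) - (Φ x - Φ y) := by abel
      have := norm_sub_le (Φ x - z) (Φ x - Φ y)
      rw [← hl] at this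
      have e : Φ x - z - (Φ x - Φ y) = Φ y - z := by abel
      rw [e] at this
      linarith
    unfold kerH
    rw [if_pos c1, if_pos c2]
    have e1 : (‖Φ y - Φ x‖₊ : ℝ≥0∞) = ‖Φ x - Φ y‖₊ := by rw [← nnnorm_neg, neg_sub]
    have e2 : (‖y - x‖₊ : ℝ≥0∞) = ‖x - y‖₊ := by rw [← nnnorm_neg, neg_sub]
    rw [e1, e2, ← hk, ← add_mul, ← mul_assoc (ENNReal.ofReal _)]
    have h3 : (‖u (Φ x) - u (Φ y)‖₊ : ℝ≥0∞) ≤ ‖u (Φ x) - u z‖₊ + ‖u (Φ y) - u z‖₊ := by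
      have e : u (Φ x) - u (Φ y) = (u (Φ x) - u z) - (u (Φ y) - u z) := by abel
      rw [e]
      exact_mod_cast nnnorm_sub_le _ _
    refine mul_le_mul_left ?_ k
    calc W ≤ ((‖u (Φ x) - u z‖₊ : ℝ≥0∞) + ‖u (Φ y) - u z‖₊) ^ p := by
            rw [hW]; gcongr
      _ ≤ ENNReal.ofReal (2 ^ (p - 1)) *
          ((‖u (Φ x) - u z‖₊ : ℝ≥0∞) ^ p + (‖u (Φ y) - u z‖₊ : ℝ≥0∞) ^ p) := by
        refine (ENNReal.rpow_add_le_mul_rpow_add_rpow _ _ hp).trans (le_of_eq ?_)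
        congr 1
        rw [← ENNReal.ofReal_rpow_of_pos (by norm_num)]; simp
  have hint : volume E * (W * k) ≤ ENNReal.ofReal (2 ^ (p - 1)) *
        ((∫⁻ z in ω, kerH a p Φ u x y z) + ∫⁻ z in ω, kerH a p Φ u y x z) := by
    have m1 : Measurable fun z => kerH a p Φ u x y z :=
      kerH_meas a p hΦ hu measurable_const measurable_const measurable_id
    have m2 : Measurable fun z => kerH a p Φ u y x z :=
      kerH_meas a p hΦ hu measurable_const measurable_const measurable_id
    rw [← lintegral_add_left m1, ← lintegral_const_mul _ (by fun_prop)]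
    calc volume E * (W * k) = ∫⁻ z in Metric.ball (Φ x) (l / 2),
            W * k ∂(volume.restrict ω) := by
          rw [lintegral_const, Measure.restrict_apply MeasurableSet.univ, univ_inter,
            Measure.restrict_apply measurableSet_ball, mul_comm]
      _ ≤ ∫⁻ z in Metric.ball (Φ x) (l / 2), ENNReal.ofReal (2 ^ (p - 1)) *
            (kerH a p Φ u x y z + kerH a p Φ u y x z) ∂(volume.restrict ω) :=
          setLIntegral_mono' measurableSet_ball hpt
      _ ≤ _ := setLIntegral_le_lintegral _ _
  have hlm : (‖Φ x - Φ y‖₊ : ℝ≥0∞) ^ m = ENNReal.ofReal (l ^ m) := by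
    rw [ENNReal.ofReal_pow hl0.le]
    congr 1
    rw [hl]; exact (ofReal_norm _).symm
  have hmul : W / (‖x - y‖₊ : ℝ≥0∞) ^ ((m : ℝ) + a) = ENNReal.ofReal (l ^ m) * (W * k) := by
    rw [hk, hlm, div_eq_mul_inv]
    have : ENNReal.ofReal (l ^ m) * (ENNReal.ofReal (l ^ m))⁻¹ = 1 :=
      ENNReal.mul_inv_cancel (by simpa using pow_pos hl0 m) (by simp)
    calc _ = W * 1 * ((‖x - y‖₊ : ℝ≥0∞) ^ ((m : ℝ) + a))⁻¹ := by rw [mul_one]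
      _ = _ := by rw [← this]; ring
  rw [hmul]
  calc ENNReal.ofReal (l ^ m) * (W * k)
      = ENNReal.ofReal (2 ^ m / c') * (ENNReal.ofReal (c' * (l / 2) ^ m) * (W * k)) := by
        rw [← mul_assoc (ENNReal.ofReal (2 ^ m / c')), ← ENNReal.ofReal_mul (by positivity)]
        congr 2
        rw [div_pow]; field_simp
    _ ≤ ENNReal.ofReal (2 ^ m / c') * (volume E * (W * k)) := by gcongr
    _ ≤ ENNReal.ofReal (2 ^ m / c') * (ENNReal.ofReal (2 ^ (p - 1)) *
        ((∫⁻ z in ω, kerH a p Φ u x y z) + ∫⁻ z in ω, kerH a p Φ u y x z)) := by gcongr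
    _ = _ := by
        rw [← mul_assoc, ← ENNReal.ofReal_mul (by positivity)]
        congr 2; ring

lemma kerH_inner {m ν : ℕ} (a p : ℝ) (ha : 0 < a) (hp : 1 ≤ p) (L : ℝ) (hL : 0 < L)
    (K : ℝ≥0∞) (hK : ∀ t : ℝ, 0 < t → ∀ x : Eucl m,
      ∫⁻ y, (if t ≤ ‖x - y‖ then ENNReal.ofReal (‖x - y‖ ^ (-((m : ℝ) + a))) else 0)
        ≤ K * ENNReal.ofReal (t ^ (-a)))
    {Φ : Eucl m → Eucl m} {u : Eucl m → Eucl ν}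
    {ω Z : Set (Eucl m)} (hωm : MeasurableSet ω) (hZ : volume Z = 0) {x : Eucl m} {Ax : ℝ}
    (hA : 0 < Ax) (hlip : ∀ y ∈ ω \ Z, ‖Φ x - Φ y‖ ≤ L * Ax * ‖x - y‖) (z : Eucl m) :
    ∫⁻ y in ω, kerH a p Φ u x y z ≤ K * ENNReal.ofReal (2 ^ m * (2 * L) ^ a) *
      (ENNReal.ofReal (Ax ^ a) *
        ((‖u (Φ x) - u z‖₊ : ℝ≥0∞) ^ p / (‖Φ x - z‖₊ : ℝ≥0∞) ^ ((m : ℝ) + a))) := by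
  have hp0 : 0 < p := by linarith
  have hma : 0 < (m : ℝ) + a := by positivity
  by_cases hz : Φ x = z
  · subst hz
    have : ∀ y, kerH a p Φ u x y (Φ x) = 0 := by
      intro y; unfold kerH; simp [ENNReal.zero_rpow_of_pos hp0]
    simp [this]
  set D : ℝ := ‖Φ x - z‖ with hD
  have hD0 : 0 < D := norm_pos_iff.2 (sub_ne_zero.2 hz)
  set U : ℝ≥0∞ := (‖u (Φ x) - u z‖₊ : ℝ≥0∞) ^ p with hU
  have hUtop : U ≠ ⊤ := by
    rw [hU]; exact ENNReal.rpow_ne_top_of_nonneg hp0.le ENNReal.coe_ne_top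
  set t : ℝ := D / (2 * L * Ax) with ht
  have ht0 : 0 < t := by positivity
  have hnn : ∀ v : Eucl m, (‖v‖₊ : ℝ≥0∞) = ENNReal.ofReal ‖v‖ := fun v =>
    (ofReal_norm v).symm
  have hpt : ∀ y ∈ ω \ Z, kerH a p Φ u x y z ≤ U * ENNReal.ofReal ((2 / D) ^ m) *
      (if t ≤ ‖x - y‖ then ENNReal.ofReal (‖x - y‖ ^ (-((m : ℝ) + a))) else 0) := by
    intro y hy
    have hl := hlip y hy
    unfold kerH
    split_ifs with h1 h2 h2
    · have hxy : 0 < ‖x - y‖ := lt_of_lt_of_le ht0 h2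
      rw [← hU, mul_assoc]
      gcongr
      · rw [hnn, ← ENNReal.ofReal_pow (norm_nonneg _), ← ENNReal.ofReal_inv_of_pos]
        · apply ENNReal.ofReal_le_ofReal
          rw [← inv_pow]
          gcongr
          rw [← inv_div]
          gcongr
          linarith
        · apply pow_pos; linarith
      · rw [hnn, ENNReal.ofReal_rpow_of_pos hxy, ← ENNReal.ofReal_inv_of_pos (by positivity),
          Real.rpow_neg hxy.le]
    · exfalso
      apply h2
      rw [ht, div_le_iff₀ (by positivity)]
      nlinarith
    · exact zero_le
    · simp
  have hae : ∀ᵐ y ∂(volume.restrict ω), y ∈ ω \ Z := by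
    have h1 : ∀ᵐ y ∂(volume.restrict ω), y ∉ Z :=
      ae_restrict_of_ae (measure_eq_zero_iff_ae_notMem.1 hZ)
    filter_upwards [h1, ae_restrict_mem hωm] with y h1 h2 using ⟨h2, h1⟩
  calc ∫⁻ y in ω, kerH a p Φ u x y z
      ≤ ∫⁻ y in ω, U * ENNReal.ofReal ((2 / D) ^ m) *
      (if t ≤ ‖x - y‖ then ENNReal.ofReal (‖x - y‖ ^ (-((m : ℝ) + a))) else 0) :=
        lintegral_mono_ae (hae.mono hpt)
    _ ≤ ∫⁻ y, U * ENNReal.ofReal ((2 / D) ^ m) *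
      (if t ≤ ‖x - y‖ then ENNReal.ofReal (‖x - y‖ ^ (-((m : ℝ) + a))) else 0) :=
        setLIntegral_le_lintegral _ _
    _ = U * ENNReal.ofReal ((2 / D) ^ m) * ∫⁻ y,
      (if t ≤ ‖x - y‖ then ENNReal.ofReal (‖x - y‖ ^ (-((m : ℝ) + a))) else 0) :=
        lintegral_const_mul' _ _ (ENNReal.mul_ne_top hUtop (by simp))
    _ ≤ U * ENNReal.ofReal ((2 / D) ^ m) * (K * ENNReal.ofReal (t ^ (-a))) := by
        gcongr; exact hK t ht0 x
    _ = _ := by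
        rw [hnn, ← hD, ENNReal.ofReal_rpow_of_pos hD0, div_eq_mul_inv U,
          ← ENNReal.ofReal_inv_of_pos (by positivity)]
        have e : (2 / D) ^ m * t ^ (-a) =
            (2 ^ m * (2 * L) ^ a) * (Ax ^ a * (D ^ ((m : ℝ) + a))⁻¹) := by
          rw [ht, Real.rpow_neg (by positivity), Real.div_rpow hD0.le (by positivity),
            Real.mul_rpow (by positivity) hA.le, Real.rpow_add hD0, Real.rpow_natCast, div_pow]
          field_simp
        calc _ = U * K * (ENNReal.ofReal ((2 / D) ^ m) * ENNReal.ofReal (t ^ (-a))) := by ring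
          _ = _ := by
            rw [← ENNReal.ofReal_mul (by positivity), e, ENNReal.ofReal_mul (by positivity),
              ENNReal.ofReal_mul (p := Ax ^ a) (by positivity)]
            ring

lemma abstract_bound (m ν : ℕ) (s p : ℝ) (ha : 0 < s * p) (hp : 1 ≤ p) (c' : ℝ) (hc' : 0 < c')
    (L : ℝ) (hL : 0 < L) (D : ℝ≥0∞) (hD : D ≠ ⊤) :
    ∃ K : ℝ≥0∞, K ≠ ⊤ ∧ ∀ (Φ : Eucl m → Eucl m) (A : Eucl m → ℝ) (ω Z : Set (Eucl m)),
      Measurable Φ → MeasurableSet ω → volume Z = 0 → (∀ x ∈ ω \ Z, Φ x ∈ ω) →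
      (∀ x, 0 < A x) → (∀ x ∈ ω \ Z, ∀ y ∈ ω \ Z, ‖Φ x - Φ y‖ ≤ L * A x * ‖x - y‖) →
      (∀ f : Eucl m → ℝ≥0∞, ∫⁻ x in ω, ENNReal.ofReal (A x ^ (s * p)) * f (Φ x)
        ≤ D * ∫⁻ x in ω, f x) →
      (∀ z ∈ ω, ∀ lam : ℝ, 0 < lam → 2 * ENNReal.ofReal lam ≤ EMetric.diam ω →
              ENNReal.ofReal (c' * lam ^ m) ≤ volume (Metric.ball z lam ∩ ω)) →
      ∀ u : Eucl m → Eucl ν, Measurable u →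
        gagliardoPow m s p ω (fun x => u (Φ x)) ≤ K * gagliardoPow m s p ω u := by
  obtain ⟨K, hKtop, hK⟩ := tail_bound m (s * p) ha
  set c1 : ℝ≥0∞ := ENNReal.ofReal (2 ^ (p - 1) * 2 ^ m / c') with hc1
  set c2 : ℝ≥0∞ := K * ENNReal.ofReal (2 ^ m * (2 * L) ^ (s * p)) with hc2
  have hc2top : c2 ≠ ⊤ := ENNReal.mul_ne_top hKtop ENNReal.ofReal_ne_top
  refine ⟨c1 * (2 * (c2 * D)), ENNReal.mul_ne_top (by simp [hc1]) (ENNReal.mul_ne_top (by simp)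
    (ENNReal.mul_ne_top hc2top hD)), ?_⟩
  intro Φ A ω Z hΦ hωm hZ hmaps hA hlip hcov hω u hu
  set a := s * p with haa
  have hae : ∀ᵐ y ∂(volume.restrict ω), y ∈ ω \ Z := by
    have h1 : ∀ᵐ y ∂(volume.restrict ω), y ∉ Z :=
      ae_restrict_of_ae (measure_eq_zero_iff_ae_notMem.1 hZ)
    filter_upwards [h1, ae_restrict_mem hωm] with y h1 h2 using ⟨h2, h1⟩
  set G : Eucl m → Eucl m → ℝ≥0∞ := fun x y => ∫⁻ z in ω, kerH a p Φ u x y z with hG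
  have hGm : Measurable (Function.uncurry G) := by
    have : Measurable fun q : (Eucl m × Eucl m) × Eucl m => kerH a p Φ u q.1.1 q.1.2 q.2 :=
      kerH_meas a p hΦ hu (by fun_prop) (by fun_prop) (by fun_prop)
    exact this.lintegral_prod_right'
  have hGG : ∫⁻ x in ω, ∫⁻ y in ω, G x y ≤ c2 * D * gagliardoPow m s p ω u := by
    have step : ∀ x ∈ ω \ Z, ∫⁻ y in ω, G x y ≤ c2 * (ENNReal.ofReal (A x ^ a) *
        ∫⁻ z in ω, (‖u (Φ x) - u z‖₊ : ℝ≥0∞) ^ p / (‖Φ x - z‖₊ : ℝ≥0∞) ^ ((m : ℝ) + a)) := by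
      intro x hx
      have hm2 : Measurable (Function.uncurry fun y z => kerH a p Φ u x y z) :=
        kerH_meas a p hΦ hu measurable_const measurable_fst measurable_snd
      simp only [hG]
      rw [lintegral_lintegral_swap hm2.aemeasurable,
        ← lintegral_const_mul' _ _ (by simp), ← lintegral_const_mul' _ _ hc2top]
      apply lintegral_mono
      intro z
      exact kerH_inner a p ha hp L hL K hK hωm hZ (hA x) (hlip x hx) z
    calc _ ≤ ∫⁻ x in ω, c2 * (ENNReal.ofReal (A x ^ a) *
        ∫⁻ z in ω, (‖u (Φ x) - u z‖₊ : ℝ≥0∞) ^ p / (‖Φ x - z‖₊ : ℝ≥0∞) ^ ((m : ℝ) + a)) :=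
          lintegral_mono_ae (hae.mono step)
      _ = c2 * ∫⁻ x in ω, (ENNReal.ofReal (A x ^ a) *
        ∫⁻ z in ω, (‖u (Φ x) - u z‖₊ : ℝ≥0∞) ^ p / (‖Φ x - z‖₊ : ℝ≥0∞) ^ ((m : ℝ) + a)) :=
          lintegral_const_mul' _ _ hc2top
      _ ≤ c2 * (D * gagliardoPow m s p ω u) := by
          gcongr
          exact hcov (fun w => ∫⁻ z in ω, (‖u w - u z‖₊ : ℝ≥0∞) ^ p /
            (‖w - z‖₊ : ℝ≥0∞) ^ ((m : ℝ) + a))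
      _ = _ := by ring
  have hGG' : ∫⁻ x in ω, ∫⁻ y in ω, G y x = ∫⁻ x in ω, ∫⁻ y in ω, G x y :=
    lintegral_lintegral_swap (hGm.comp measurable_swap).aemeasurable
  have hsum : ∫⁻ x in ω, ∫⁻ y in ω, (G x y + G y x) =
      (∫⁻ x in ω, ∫⁻ y in ω, G x y) + ∫⁻ x in ω, ∫⁻ y in ω, G y x := by
    rw [← lintegral_add_left (f := fun x => ∫⁻ y in ω, G x y) hGm.lintegral_prod_right']
    congr 1
    ext x
    exact lintegral_add_left (hGm.comp measurable_prodMk_left) _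
  calc gagliardoPow m s p ω (fun x => u (Φ x))
      ≤ ∫⁻ x in ω, ∫⁻ y in ω, c1 * (G x y + G y x) := by
        unfold gagliardoPow
        apply lintegral_mono_ae
        filter_upwards [hae] with x hx
        apply lintegral_mono_ae
        filter_upwards [hae] with y hy
        exact kerH_pointwise a p hp c' hc' hΦ hu hω (hmaps x hx) (hmaps y hy)
    _ = c1 * ∫⁻ x in ω, ∫⁻ y in ω, (G x y + G y x) := by
        rw [← lintegral_const_mul' _ _ (by simp [hc1])]
        congr 1; ext x
        rw [← lintegral_const_mul' _ _ (by simp [hc1])]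
    _ ≤ c1 * (c2 * D * gagliardoPow m s p ω u + c2 * D * gagliardoPow m s p ω u) := by
        rw [hsum, hGG']; gcongr
    _ = _ := by ring

/-- A smooth approximation of the sup norm in the first `d` variables. -/
lemma exists_gauge (m d : ℕ) (θ : ℝ) (hθ : 1 < θ) :
    ∃ N : Eucl m → ℝ, (∀ x, 0 ≤ N x) ∧ (∀ x, ∀ i : Fin m, (i : ℕ) < d → |x i| ≤ N x) ∧
      (∀ x, ∀ b : ℝ, 0 ≤ b → (∀ i : Fin m, (i : ℕ) < d → |x i| ≤ b) → N x ≤ θ * b) ∧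
      (∃ K : ℝ, 0 ≤ K ∧ ∀ x y, |N x - N y| ≤ K * ‖x - y‖) ∧
      (∀ x y : Eucl m, ∀ t : ℝ, 0 ≤ t → (∀ i : Fin m, (i : ℕ) < d → y i = t * x i) →
        N y = t * N x) ∧
      (∀ x, 0 < N x → ContDiffAt ℝ (⊤ : ℕ∞) N x) := by
  classical
  -- choose the exponent
  obtain ⟨n, hn1, hn⟩ : ∃ n : ℕ, 1 ≤ n ∧ (m : ℝ) ≤ θ ^ n := by
    obtain ⟨n, hn⟩ := pow_unbounded_of_one_lt (m : ℝ) hθ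
    exact ⟨n + 1, by omega, hn.le.trans (pow_le_pow_right₀ hθ.le (by omega))⟩
  set q : ℕ := 2 * n with hq
  have hq0 : (0 : ℝ) < (q : ℝ) := by rw [hq]; push_cast; positivity
  have hq1 : (1 : ℝ) ≤ (q : ℝ) := by rw [hq]; exact_mod_cast (by omega : 1 ≤ 2 * n)
  have hqe : Even q := by rw [hq]; exact even_two_mul n
  set I : Finset (Fin m) := Finset.univ.filter (fun i => (i : ℕ) < d) with hI
  have hmI : ∀ i : Fin m, i ∈ I ↔ (i : ℕ) < d := by intro i; simp [hI]
  set P : Eucl m → ℝ := fun x => ∑ i ∈ I, (x i) ^ q with hP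
  have hPabs : ∀ x, P x = ∑ i ∈ I, |x i| ^ (q : ℝ) := by
    intro x; simp only [hP]
    apply Finset.sum_congr rfl
    intro i _
    rw [Real.rpow_natCast, hqe.pow_abs]
  have hP0 : ∀ x, 0 ≤ P x := fun x => Finset.sum_nonneg fun i _ => hqe.pow_nonneg _
  set N : Eucl m → ℝ := fun x => (P x) ^ (1 / (q : ℝ)) with hN
  have hN0 : ∀ x, 0 ≤ N x := fun x => Real.rpow_nonneg (hP0 x) _
  have hup : ∀ x, ∀ b : ℝ, 0 ≤ b → (∀ i : Fin m, (i : ℕ) < d → |x i| ≤ b) → N x ≤ θ * b := by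
    intro x b hb h
    have h1 : P x ≤ (θ * b) ^ q := by
      calc P x ≤ ∑ i ∈ I, b ^ q := by
            apply Finset.sum_le_sum
            intro i hi
            rw [← hqe.pow_abs]
            exact pow_le_pow_left₀ (abs_nonneg _) (h i ((hmI i).1 hi)) q
        _ = I.card * b ^ q := by simp
        _ ≤ θ ^ q * b ^ q := by
            gcongr
            have : I.card ≤ m := by simpa using Finset.card_le_univ I
            calc (I.card : ℝ) ≤ m := by exact_mod_cast this
              _ ≤ θ ^ n := hn
              _ ≤ θ ^ q := pow_le_pow_right₀ hθ.le (by omega)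
        _ = _ := by rw [mul_pow]
    calc N x ≤ ((θ * b) ^ q) ^ (1 / (q : ℝ)) := Real.rpow_le_rpow (hP0 x) h1 (by positivity)
      _ = θ * b := by
        rw [one_div]; exact Real.pow_rpow_inv_natCast (by positivity) (by omega)
  have htri : ∀ x y, N (x + y) ≤ N x + N y := by
    intro x y
    have := Real.Lp_add_le I (fun i => x i) (fun i => y i) hq1
    simpa only [hN, hPabs, PiLp.add_apply] using this
  have hlipN : ∀ v : Eucl m, N v ≤ θ * ‖v‖ := by
    intro v
    apply hup v _ (norm_nonneg _)
    intro i _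
    simpa using PiLp.norm_apply_le v i
  refine ⟨N, hN0, ?_, hup, ⟨θ, by linarith, ?_⟩, ?_, ?_⟩
  · intro x i hi
    have h1 : |x i| ^ q ≤ P x := by
      rw [hqe.pow_abs]
      exact Finset.single_le_sum (f := fun i => (x i) ^ q) (fun j _ => hqe.pow_nonneg _)
        ((hmI i).2 hi)
    calc |x i| = (|x i| ^ q) ^ (1 / (q : ℝ)) := by
          rw [one_div]; exact (Real.pow_rpow_inv_natCast (abs_nonneg _) (by omega)).symm
      _ ≤ N x := Real.rpow_le_rpow (by positivity) h1 (by positivity)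
  · intro x y
    have h1 : N x ≤ N (x - y) + N y := by simpa using htri (x - y) y
    have h2 : N y ≤ N (y - x) + N x := by simpa using htri (y - x) x
    have h3 := hlipN (x - y)
    have h4 := hlipN (y - x)
    rw [norm_sub_rev] at h4
    rw [abs_le]; constructor <;> linarith
  · intro x y t ht h
    have : P y = t ^ q * P x := by
      simp only [hP, Finset.mul_sum]
      apply Finset.sum_congr rfl
      intro i hi
      rw [h i ((hmI i).1 hi), mul_pow]
    simp only [hN]
    rw [this, Real.mul_rpow (by positivity) (hP0 x), one_div,
      Real.pow_rpow_inv_natCast ht (by omega)]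
  · intro x hx
    have hPx : P x ≠ 0 := by
      intro h
      simp only [hN, h] at hx
      rw [Real.zero_rpow (by positivity)] at hx
      exact lt_irrefl _ hx
    have hPs : ContDiff ℝ (⊤ : ℕ∞) P := by
      simp only [hP]
      apply ContDiff.sum
      intro i _
      apply ContDiff.pow
      fun_prop
    exact hPs.contDiffAt.rpow_const_of_ne hPx

lemma abs_prod_sub_prod {ι : Type*} (s : Finset ι) (f g : ι → ℝ)
    (hf : ∀ i ∈ s, 0 ≤ f i ∧ f i ≤ 1) (hg : ∀ i ∈ s, 0 ≤ g i ∧ g i ≤ 1) :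
    |∏ i ∈ s, f i - ∏ i ∈ s, g i| ≤ ∑ i ∈ s, |f i - g i| := by
  classical
  induction s using Finset.induction_on with
  | empty => simp
  | insert a s ha ih =>
    rw [Finset.prod_insert ha, Finset.prod_insert ha, Finset.sum_insert ha]
    have ih' := ih (fun i hi => hf i (Finset.mem_insert_of_mem hi))
      (fun i hi => hg i (Finset.mem_insert_of_mem hi))
    have hfa := hf a (Finset.mem_insert_self _ _)
    have hga := hg a (Finset.mem_insert_self _ _)
    have hp0 : 0 ≤ ∏ i ∈ s, f i :=
      Finset.prod_nonneg fun i hi => (hf i (Finset.mem_insert_of_mem hi)).1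
    have hp1 : ∏ i ∈ s, f i ≤ 1 :=
      Finset.prod_le_one (fun i hi => (hf i (Finset.mem_insert_of_mem hi)).1)
        fun i hi => (hf i (Finset.mem_insert_of_mem hi)).2
    have e : f a * ∏ i ∈ s, f i - g a * ∏ i ∈ s, g i =
      (f a - g a) * ∏ i ∈ s, f i + g a * (∏ i ∈ s, f i - ∏ i ∈ s, g i) := by ring
    rw [e]
    refine (abs_add_le _ _).trans ?_
    rw [abs_mul, abs_mul, abs_of_nonneg hp0, abs_of_nonneg hga.1]
    have := mul_le_of_le_one_right (abs_nonneg (f a - g a)) hp1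
    have := mul_le_of_le_one_left (abs_nonneg (∏ i ∈ s, f i - ∏ i ∈ s, g i)) hga.2
    linarith

/-- The cutoff in the last `m - d` variables. -/
lemma exists_cutoff (m d : ℕ) (ρ₁ ρ : ℝ) (h0 : 0 < ρ₁) (h1 : ρ₁ < ρ) :
    ∃ χ : Eucl m → ℝ, ContDiff ℝ (⊤ : ℕ∞) χ ∧ (∀ x, 0 ≤ χ x) ∧ (∀ x, χ x ≤ 1) ∧
      (∃ K : ℝ, 0 ≤ K ∧ ∀ x y, |χ x - χ y| ≤ K * ‖x - y‖) ∧
      (∀ x, (∀ i : Fin m, d ≤ (i : ℕ) → |x i| ≤ ρ₁) → χ x = 1) ∧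
      (∀ x, (∃ i : Fin m, d ≤ (i : ℕ) ∧ ρ ≤ |x i|) → χ x = 0) ∧
      (∀ x y : Eucl m, (∀ i : Fin m, d ≤ (i : ℕ) → x i = y i) → χ x = χ y) := by
  classical
  let ψ : ContDiffBump (0 : ℝ) := ⟨ρ₁, ρ, h0, h1⟩
  set I : Finset (Fin m) := Finset.univ.filter (fun i => d ≤ (i : ℕ)) with hI
  have hmI : ∀ i : Fin m, i ∈ I ↔ d ≤ (i : ℕ) := by intro i; simp [hI]
  obtain ⟨K, hK⟩ := ContDiff.lipschitzWith_of_hasCompactSupport (𝕂 := ℝ) (n := 1)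
    ψ.hasCompactSupport ψ.contDiff (by simp)
  have hψ : ∀ t, 0 ≤ ψ t ∧ ψ t ≤ 1 := fun t => ⟨ψ.nonneg, ψ.le_one⟩
  refine ⟨fun x => ∏ i ∈ I, ψ (x i), ?_, ?_, ?_, ⟨I.card * K, by positivity, ?_⟩, ?_, ?_, ?_⟩
  · apply contDiff_prod
    intro i _
    exact ψ.contDiff.comp (by fun_prop)
  · exact fun x => Finset.prod_nonneg fun i _ => (hψ _).1
  · exact fun x => Finset.prod_le_one (fun i _ => (hψ _).1) fun i _ => (hψ _).2
  · intro x y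
    refine (abs_prod_sub_prod I _ _ (fun i _ => hψ _) (fun i _ => hψ _)).trans ?_
    calc ∑ i ∈ I, |ψ (x i) - ψ (y i)| ≤ ∑ i ∈ I, K * ‖x - y‖ := by
          apply Finset.sum_le_sum
          intro i _
          have h := hK.dist_le_mul (x i) (y i)
          rw [Real.dist_eq] at h
          refine h.trans ?_
          gcongr
          rw [dist_eq_norm]
          simpa using PiLp.norm_apply_le (x - y) i
      _ = _ := by simp; ring
  · intro x hx
    apply Finset.prod_eq_one
    intro i hi
    apply ψ.one_of_mem_closedBall
    simpa using hx i ((hmI i).1 hi)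
  · rintro x ⟨i, hi, hx⟩
    apply Finset.prod_eq_zero ((hmI i).2 hi)
    apply ψ.zero_of_le_dist
    simpa using hx
  · intro x y h
    apply Finset.prod_congr rfl
    intro i hi
    rw [h i ((hmI i).1 hi)]

/-- The radial profile. -/
lemma exists_profile (α β : ℝ) (h0 : 0 < α) (h1 : α < β) (hβ : β ≤ 1) :
    ∃ (g g' : ℝ → ℝ) (δ : ℝ), 0 < δ ∧ δ < 1 ∧ ContDiff ℝ (⊤ : ℕ∞) g ∧
      (∀ t, HasDerivAt g (g' t) t) ∧ (∀ t, g' t ≤ 0) ∧ (∀ t, -(1 - δ) ≤ g' t) ∧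
      α ≤ g 0 ∧ g 0 ≤ 1 ∧ (∀ t, β ≤ t → g t = 0) := by
  set β₁ : ℝ := (α + β) / 2 with hβ₁
  have hb1 : α < β₁ := by rw [hβ₁]; linarith
  have hb2 : β₁ < β := by rw [hβ₁]; linarith
  set δ : ℝ := 1 - α / β₁ with hδ
  have hδ0 : 0 < δ := by
    rw [hδ, sub_pos, div_lt_one (by linarith)]; exact hb1
  have hδ1 : δ < 1 := by rw [hδ]; have : 0 < α / β₁ := by apply div_pos <;> linarith
                         linarith
  let T : ℝ → ℝ := fun t => (1 - δ) * Real.smoothTransition ((β - t) / (β - β₁))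
  have hTs : ContDiff ℝ (⊤ : ℕ∞) T := by
    apply ContDiff.mul contDiff_const
    apply Real.smoothTransition.contDiff.comp
    fun_prop
  have hT0 : ∀ t, 0 ≤ T t := fun t =>
    mul_nonneg (by linarith) (Real.smoothTransition.nonneg _)
  have hT1 : ∀ t, T t ≤ 1 - δ := fun t =>
    mul_le_of_le_one_right (by linarith) (Real.smoothTransition.le_one _)
  have hTc : Continuous T := hTs.continuous
  have hder : ∀ t, HasDerivAt (fun t => ∫ l in t..β, T l) (-T t) t := fun t =>
    intervalIntegral.integral_hasDerivAt_left (hTc.intervalIntegrable _ _)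
      (hTc.stronglyMeasurableAtFilter _ _) hTc.continuousAt
  refine ⟨fun t => ∫ l in t..β, T l, fun t => -T t, δ, hδ0, hδ1, ?_, hder, ?_, ?_, ?_, ?_, ?_⟩
  · rw [contDiff_infty_iff_deriv]
    refine ⟨fun t => (hder t).differentiableAt, ?_⟩
    have : deriv (fun t => ∫ l in t..β, T l) = fun t => -T t := by
      ext t; exact (hder t).deriv
    rw [this]
    exact hTs.neg
  · intro t; have := hT0 t; linarith
  · intro t; have := hT1 t; linarith
  · have e : ∫ l in (0 : ℝ)..β, T l = (∫ l in (0 : ℝ)..β₁, T l) + ∫ l in β₁..β, T l :=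
      (intervalIntegral.integral_add_adjacent_intervals (hTc.intervalIntegrable _ _)
        (hTc.intervalIntegrable _ _)).symm
    have e2 : 0 ≤ ∫ l in β₁..β, T l :=
      intervalIntegral.integral_nonneg hb2.le fun t _ => hT0 t
    have e3 : ∫ l in (0 : ℝ)..β₁, T l = ∫ l in (0 : ℝ)..β₁, (1 - δ) := by
      apply intervalIntegral.integral_congr
      intro l hl
      rw [uIcc_of_le (by linarith)] at hl
      simp only [T]
      rw [Real.smoothTransition.one_of_one_le, mul_one]
      rw [le_div_iff₀ (by linarith)]; linarith [hl.2]
    rw [intervalIntegral.integral_const] at e3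
    have : (β₁ - 0) • (1 - δ) = α := by
      rw [hδ]; simp; field_simp [(by linarith : β₁ ≠ 0)]
    simp only
    linarith
  · calc ∫ l in (0 : ℝ)..β, T l ≤ ∫ l in (0 : ℝ)..β, (1 : ℝ) := by
          apply intervalIntegral.integral_mono_on (by linarith) (hTc.intervalIntegrable _ _)
            (by simp)
          intro t _
          linarith [hT1 t]
      _ ≤ 1 := by simp; linarith
  · intro t ht
    have : ∫ l in t..β, T l = ∫ l in t..β, (0 : ℝ) := by
      apply intervalIntegral.integral_congr
      intro l hl
      rw [uIcc_of_ge ht] at hl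
      simp only [T]
      rw [Real.smoothTransition.zero_of_nonpos, mul_zero]
      apply div_nonpos_of_nonpos_of_nonneg <;> linarith [hl.1]
    simpa using this

lemma sub_pow_le_abs (k : ℕ) (hk : 1 ≤ k) (a b : ℝ) (ha : 0 ≤ a) (hb : 0 ≤ b) :
    |a - b| ^ k ≤ |a ^ k - b ^ k| := by
  wlog h : b ≤ a generalizing a b
  · rw [abs_sub_comm, abs_sub_comm (a ^ k)]
    exact this b a hb ha (le_of_not_ge h)
  have h2 : b ^ k ≤ a ^ k := pow_le_pow_left₀ hb h k
  rw [abs_of_nonneg (sub_nonneg.2 h), abs_of_nonneg (sub_nonneg.2 h2)]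
  have := pow_add_pow_le (sub_nonneg.2 h) hb (by omega : k ≠ 0)
  rw [sub_add_cancel] at this
  linarith

lemma pow_mul_sub_le_abs (k : ℕ) (a b : ℝ) (ha : 0 ≤ a) (hb : 0 ≤ b) :
    a ^ k * |a - b| ≤ |a ^ (k + 1) - b ^ (k + 1)| := by
  rcases le_total b a with h | h
  · have h2 : b ^ k ≤ a ^ k := pow_le_pow_left₀ hb h k
    rw [abs_of_nonneg (sub_nonneg.2 h)]
    refine le_trans ?_ (le_abs_self _)
    have := mul_le_mul_of_nonneg_right h2 hb
    rw [pow_succ, pow_succ]; nlinarith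
  · have h2 : a ^ k ≤ b ^ k := pow_le_pow_left₀ ha h k
    rw [abs_of_nonpos (sub_nonpos.2 h)]
    refine le_trans ?_ (neg_le_abs _)
    have := mul_le_mul_of_nonneg_right h2 hb
    rw [pow_succ, pow_succ]; nlinarith

lemma scalar_lip (k : ℕ) (g : ℝ → ℝ) (hg0 : ∀ t, 0 ≤ t → 0 ≤ g t) (hg1 : ∀ t, 0 ≤ t → g t ≤ 1)
    (hgl : ∀ t t', 0 ≤ t → 0 ≤ t' → |g t - g t'| ≤ |t - t'|) (hgz : ∀ t, 1 ≤ t → g t = 0)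
    (χ χ' σ τ : ℝ) (hχ0 : 0 ≤ χ) (hχ1 : χ ≤ 1) (hχ0' : 0 ≤ χ') (hχ1' : χ' ≤ 1)
    (hσ : 0 < σ) (hτ : 0 < τ) :
    |(σ + χ * g σ) ^ (k + 1) - (τ + χ' * g τ) ^ (k + 1)| ≤
      ((k + 1) * 4 ^ (k + 1) + 8 ^ (k + 1)) * ((σ + χ * g σ) / σ) ^ (k + 1) *
        (|σ ^ (k + 1) - τ ^ (k + 1)| + |χ - χ'|) := by
  set S := σ + χ * g σ with hS
  set S' := τ + χ' * g τ with hS'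
  set X := |χ - χ'| with hX
  set R := |σ ^ (k + 1) - τ ^ (k + 1)| with hR
  have hX0 : 0 ≤ X := abs_nonneg _
  have hX1 : X ≤ 1 := by rw [hX, abs_le]; constructor <;> linarith
  have hR0 : 0 ≤ R := abs_nonneg _
  have hgσ := hg0 σ hσ.le
  have hgτ := hg0 τ hτ.le
  have hSσ : σ ≤ S := by rw [hS]; nlinarith
  have hS0 : 0 < S := by linarith
  have hS'0 : 0 < S' := by rw [hS']; nlinarith
  set B := S / σ with hB
  have hB1 : 1 ≤ B := by rw [hB, le_div_iff₀ hσ]; linarith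
  have hBk : 1 ≤ B ^ (k + 1) := one_le_pow₀ hB1
  have hE : |S - S'| ≤ 2 * |σ - τ| + X * g σ := by
    have e : S - S' = (σ - τ) + χ' * (g σ - g τ) + (χ - χ') * g σ := by rw [hS, hS']; ring
    rw [e]
    have a1 := abs_add_le ((σ - τ) + χ' * (g σ - g τ)) ((χ - χ') * g σ)
    have a2 := abs_add_le (σ - τ) (χ' * (g σ - g τ))
    rw [abs_mul, abs_of_nonneg hgσ] at a1
    rw [abs_mul, abs_of_nonneg hχ0'] at a2
    have a3 := hgl σ τ hσ.le hτ.le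
    have a4 : χ' * |g σ - g τ| ≤ |σ - τ| := by
      calc χ' * |g σ - g τ| ≤ 1 * |σ - τ| := by gcongr
        _ = _ := one_mul _
    linarith
  have h4 : (1 : ℝ) ≤ 4 ^ (k + 1) := one_le_pow₀ (by norm_num)
  have h8 : (1 : ℝ) ≤ 8 ^ (k + 1) := one_le_pow₀ (by norm_num)
  rcases le_total S' (2 * S) with hc | hc
  · have b1 : |S ^ (k + 1) - S' ^ (k + 1)| ≤ |S - S'| * ((k + 1 : ℕ) : ℝ) * (2 * S) ^ k := by
      refine (abs_pow_sub_pow_le S S' (k + 1)).trans ?_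
      simp only [Nat.add_sub_cancel]
      gcongr
      rw [abs_of_pos hS0, abs_of_pos hS'0]
      exact max_le (by linarith) hc
    have b2 : S ^ k * |σ - τ| ≤ B ^ (k + 1) * R := by
      have : S = B * σ := by rw [hB]; field_simp
      rw [this, mul_pow, mul_assoc]
      have := pow_mul_sub_le_abs k σ τ hσ.le hτ.le
      gcongr
      omega
    have b3 : S ^ k * g σ ≤ 2 ^ k * B ^ (k + 1) := by
      rcases le_total 1 σ with h | h
      · rw [hgz σ h]; simp; positivity
      · have h5 : S ≤ 2 := by
          rw [hS]; have := hg1 σ hσ.le; nlinarith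
        calc S ^ k * g σ ≤ 2 ^ k * 1 := by
              gcongr; exact hg1 σ hσ.le
          _ ≤ _ := by gcongr
    have h24 : (2 : ℝ) ^ k * 2 ≤ 4 ^ (k + 1) := by
      rw [← pow_succ]; exact pow_le_pow_left₀ (by norm_num) (by norm_num) _
    have h44 : (2 : ℝ) ^ k * 2 ^ k ≤ 4 ^ (k + 1) := by
      rw [← mul_pow]; norm_num; exact pow_le_pow_right₀ (by norm_num) (by omega)
    calc |S ^ (k + 1) - S' ^ (k + 1)| ≤ |S - S'| * ((k + 1 : ℕ) : ℝ) * (2 * S) ^ k := b1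
      _ ≤ (2 * |σ - τ| + X * g σ) * ((k + 1 : ℕ) : ℝ) * (2 * S) ^ k := by gcongr
      _ = (k + 1) * (2 ^ k * 2 * (S ^ k * |σ - τ|) + 2 ^ k * X * (S ^ k * g σ)) := by
          push_cast; rw [mul_pow]; ring
      _ ≤ (k + 1) * (2 ^ k * 2 * (B ^ (k + 1) * R) + 2 ^ k * X * (2 ^ k * B ^ (k + 1))) := by
          gcongr
      _ = (k + 1) * B ^ (k + 1) * ((2 ^ k * 2) * R + (2 ^ k * 2 ^ k) * X) := by ring
      _ ≤ (k + 1) * B ^ (k + 1) * (4 ^ (k + 1) * R + 4 ^ (k + 1) * X) := by gcongr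
      _ = ((k + 1) * 4 ^ (k + 1)) * B ^ (k + 1) * (R + X) := by ring
      _ ≤ _ := by gcongr; linarith
  · have d0 : S ^ (k + 1) ≤ S' ^ (k + 1) := pow_le_pow_left₀ hS0.le (by linarith) _
    have d1 : S' ≤ 2 * |S - S'| := by
      have := neg_le_abs (S - S'); linarith
    have d2 : |S - S'| ≤ 2 * |σ - τ| + X := by
      have := mul_le_of_le_one_right hX0 (hg1 σ hσ.le); linarith
    have d3 := sub_pow_le_abs (k + 1) (by omega) σ τ hσ.le hτ.le
    have d4 : X ^ (k + 1) ≤ X := by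
      rw [pow_succ]; exact mul_le_of_le_one_left hX0 (pow_le_one₀ hX0 hX1)
    calc |S ^ (k + 1) - S' ^ (k + 1)| ≤ S' ^ (k + 1) := by
          rw [abs_of_nonpos (by linarith)]
          have : 0 ≤ S ^ (k + 1) := by positivity
          linarith
      _ ≤ (2 * (2 * |σ - τ| + X)) ^ (k + 1) := by
          apply pow_le_pow_left₀ hS'0.le; linarith
      _ = 2 ^ (k + 1) * (2 * |σ - τ| + X) ^ (k + 1) := by rw [mul_pow]
      _ ≤ 2 ^ (k + 1) * (2 ^ (k + 1 - 1) * ((2 * |σ - τ|) ^ (k + 1) + X ^ (k + 1))) := by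
          gcongr
          exact add_pow_le (by positivity) hX0 _
      _ ≤ 2 ^ (k + 1) * (2 ^ (k + 1) * (2 ^ (k + 1) * R + 2 ^ (k + 1) * X)) := by
          have : (1 : ℝ) ≤ 2 ^ (k + 1) := one_le_pow₀ (by norm_num)
          gcongr
          · norm_num
          · omega
          · rw [mul_pow]; gcongr
          · nlinarith
      _ = 8 ^ (k + 1) * 1 * (R + X) := by
          rw [show (8 : ℝ) = 2 * 2 * 2 by norm_num, mul_pow, mul_pow]; ring
      _ ≤ _ := by
          gcongr
          have : (0 : ℝ) ≤ (k + 1) * 4 ^ (k + 1) := by positivity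
          linarith

/-- Projection on the first `d` coordinates. -/
def projL (m d : ℕ) : Eucl m →L[ℝ] Eucl m :=
  LinearMap.toContinuousLinearMap
    { toFun := fun x => WithLp.toLp 2 fun i : Fin m => if (i : ℕ) < d then x i else 0
      map_add' := by intro x y; ext i; simp; split_ifs <;> simp
      map_smul' := by intro c x; ext i; simp }

lemma projL_apply (m d : ℕ) (x : Eucl m) (i : Fin m) :
    projL m d x i = if (i : ℕ) < d then x i else 0 := rfl

lemma projL_projL (m d : ℕ) (x : Eucl m) : projL m d (projL m d x) = projL m d x := by
  ext i; simp only [projL_apply]; split_ifs <;> rfl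

lemma det_diag (m d : ℕ) (hdm : d ≤ m) (a : ℝ) :
    LinearMap.det ((ContinuousLinearMap.id ℝ (Eucl m) + (a - 1) • projL m d :
      Eucl m →L[ℝ] Eucl m) : Eucl m →ₗ[ℝ] Eucl m) = a ^ d := by
  classical
  rw [← LinearMap.det_toMatrix (EuclideanSpace.basisFun (Fin m) ℝ).toBasis]
  have : LinearMap.toMatrix (EuclideanSpace.basisFun (Fin m) ℝ).toBasis
      (EuclideanSpace.basisFun (Fin m) ℝ).toBasis
      ((ContinuousLinearMap.id ℝ (Eucl m) + (a - 1) • projL m d :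
      Eucl m →L[ℝ] Eucl m) : Eucl m →ₗ[ℝ] Eucl m) =
      Matrix.diagonal fun i : Fin m => if (i : ℕ) < d then a else 1 := by
    ext i j
    rw [LinearMap.toMatrix_apply]
    by_cases hij : i = j
    · subst hij
      by_cases h : (i : ℕ) < d <;> simp [projL_apply, h]
    · by_cases h : (i : ℕ) < d <;> simp [projL_apply, h, hij]
  rw [this, Matrix.det_diagonal, Finset.prod_ite]
  simp [Fin.card_filter_val_lt, hdm]

lemma det_rank_one (m d : ℕ) (hd1 : 1 ≤ d) (hdm : d ≤ m) (a : ℝ) (ha : a ≠ 0)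
    (φ : Eucl m →L[ℝ] ℝ) (x : Eucl m) :
    (ContinuousLinearMap.id ℝ (Eucl m) + (a - 1) • projL m d + φ.smulRight (projL m d x)).det =
      a ^ (d - 1) * (a + φ (projL m d x)) := by
  have e : ((ContinuousLinearMap.id ℝ (Eucl m) + (a - 1) • projL m d +
      φ.smulRight (projL m d x) : Eucl m →L[ℝ] Eucl m) : Eucl m →ₗ[ℝ] Eucl m) =
      ((ContinuousLinearMap.id ℝ (Eucl m) + (a - 1) • projL m d :
      Eucl m →L[ℝ] Eucl m) : Eucl m →ₗ[ℝ] Eucl m) ∘ₗ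
        LinearMap.transvection (φ : Eucl m →ₗ[ℝ] ℝ) (a⁻¹ • projL m d x) := by
    ext v i
    simp [LinearMap.transvection.apply, projL_projL]
    field_simp
    ring
  rw [ContinuousLinearMap.det, e, LinearMap.det_comp, det_diag m d hdm,
    LinearMap.transvection.det]
  obtain ⟨n, rfl⟩ : ∃ n, d = n + 1 := ⟨d - 1, by omega⟩
  simp
  field_simp
  ring

/-- Directional derivative of the dilation factor. -/
lemma radial_deriv (n : ℕ) (hn : 1 ≤ n) (g g' : ℝ → ℝ) (hg : ∀ t, HasDerivAt g (g' t) t)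
    (χ σ : ℝ) (hσ : 0 < σ) :
    HasDerivAt (fun τ : ℝ => (1 + χ * g (σ * (1 + τ) ^ (1 / (n : ℝ))) /
      (σ * (1 + τ) ^ (1 / (n : ℝ)))) ^ n)
      ((1 + χ * g σ / σ) ^ (n - 1) * (χ * (g' σ - g σ / σ))) 0 := by
  have hn0 : (n : ℝ) ≠ 0 := by positivity
  have h1 : HasDerivAt (fun τ : ℝ => 1 + τ) 1 0 := by
    simpa using (hasDerivAt_id (0 : ℝ)).const_add 1
  have h2 : HasDerivAt (fun τ : ℝ => (1 + τ) ^ (1 / (n : ℝ))) (1 / (n : ℝ)) 0 := by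
    have := h1.rpow_const (p := 1 / (n : ℝ)) (Or.inl (by norm_num))
    simpa using this
  have h3 : HasDerivAt (fun τ : ℝ => σ * (1 + τ) ^ (1 / (n : ℝ))) (σ * (1 / (n : ℝ))) 0 :=
    h2.const_mul σ
  have hval : σ * (1 + (0 : ℝ)) ^ (1 / (n : ℝ)) = σ := by simp
  have h4 : HasDerivAt (fun τ : ℝ => g (σ * (1 + τ) ^ (1 / (n : ℝ))))
      (g' σ * (σ * (1 / (n : ℝ)))) 0 := by
    have := hg (σ * (1 + (0 : ℝ)) ^ (1 / (n : ℝ)))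
    have h5 := HasDerivAt.comp (0 : ℝ) this h3
    rw [hval] at h5
    exact h5
  have h5 := ((h4.const_mul χ).div h3 (by rw [hval]; exact hσ.ne')).const_add 1
  have h6 := h5.pow n
  refine h6.congr_deriv ?_
  simp only [Pi.div_apply, hval]
  field_simp

lemma norm_projL_le (m d : ℕ) (x : Eucl m) (b : ℝ) (hb : 0 ≤ b)
    (h : ∀ i : Fin m, (i : ℕ) < d → |x i| ≤ b) : ‖projL m d x‖ ≤ Real.sqrt m * b := by
  rw [EuclideanSpace.norm_eq]
  calc _ ≤ Real.sqrt (∑ i : Fin m, b ^ 2) := by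
        apply Real.sqrt_le_sqrt
        apply Finset.sum_le_sum
        intro i _
        rw [projL_apply]
        split_ifs with hi
        · exact pow_le_pow_left₀ (norm_nonneg _) (by simpa using h i hi) 2
        · simp; positivity
    _ = _ := by
        simp [Real.sqrt_mul, Real.sqrt_sq hb]

set_option maxHeartbeats 4000000 in
/-- The map at unit scale. -/
lemma unit_map (m : ℕ) (a : ℝ) (d : ℕ) (hd1 : 1 ≤ d) (hdm : d ≤ m) (hda : a < d)
    (ρ₁ ρ ρ₂ : ℝ) (h0 : 0 < ρ₁) (h1 : ρ₁ < ρ) (h2 : ρ < ρ₂) (h3 : ρ₂ < 1) :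
    ∃ (Φ : Eucl m → Eucl m) (A : Eucl m → ℝ) (Φ' : Eucl m → Eucl m →L[ℝ] Eucl m) (L δ : ℝ),
      0 < L ∧ 0 < δ ∧ Measurable Φ ∧ ContDiffOn ℝ (⊤ : ℕ∞) Φ (dualPiece m d ρ)ᶜ ∧
      Function.Injective Φ ∧
      (∀ x, x ∉ rect m d (1 - ρ) ρ → Φ x = x) ∧
      (∀ x ∈ rect m d (1 - ρ) ρ₁ \ dualPiece m d ρ,
            Φ x ∈ rect m d (1 - ρ) ρ₁ \ rect m d (1 - ρ₂) ρ₁) ∧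
      (∀ x ∈ rect m d (1 - ρ) ρ \ dualPiece m d ρ, Φ x ∈ rect m d (1 - ρ) ρ) ∧
      (∀ x, 1 ≤ A x) ∧
      (∀ x y, (∃ i : Fin m, (i : ℕ) < d ∧ x i ≠ 0) → (∃ i : Fin m, (i : ℕ) < d ∧ y i ≠ 0) →
        ‖Φ x - Φ y‖ ≤ L * A x * ‖x - y‖) ∧
      (∀ x, (∃ i : Fin m, (i : ℕ) < d ∧ x i ≠ 0) →
        HasFDerivAt Φ (Φ' x) x ∧ δ * A x ^ a ≤ |(Φ' x).det|) := by
  obtain ⟨k, hk⟩ : ∃ k : ℕ, 1 / ((k : ℝ) + 1) < d - a := exists_nat_one_div_lt (by linarith)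
  set n : ℕ := k + 1 with hn
  have hn0 : n ≠ 0 := by omega
  have hnR : (0 : ℝ) < (n : ℝ) := by positivity
  have hna : (n : ℝ) * a ≤ n * d - 1 := by
    have e : (n : ℝ) = (k : ℝ) + 1 := by rw [hn]; push_cast; ring
    rw [← e, div_lt_iff₀ hnR] at hk
    linarith
  set θ : ℝ := ((1 - ρ) / (1 - ρ₂) + 1) / 2 with hθ
  have hq : 1 < (1 - ρ) / (1 - ρ₂) := by rw [lt_div_iff₀ (by linarith)]; linarith
  have hθ1 : 1 < θ := by rw [hθ]; linarith
  have hθ2 : θ * (1 - ρ₂) < 1 - ρ := by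
    have : θ < (1 - ρ) / (1 - ρ₂) := by rw [hθ]; linarith
    rwa [lt_div_iff₀ (by linarith)] at this
  have hα0 : 0 < θ * (1 - ρ₂) := mul_pos (by linarith) (by linarith)
  set α : ℝ := (θ * (1 - ρ₂)) ^ (1 / (n : ℝ)) with hα
  set β : ℝ := (1 - ρ) ^ (1 / (n : ℝ)) with hβ
  have hαn : α ^ n = θ * (1 - ρ₂) := by
    rw [hα, one_div]; exact Real.rpow_inv_natCast_pow hα0.le hn0
  have hβn : β ^ n = 1 - ρ := by
    rw [hβ, one_div]; exact Real.rpow_inv_natCast_pow (by linarith) hn0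
  have hα1 : 0 < α := Real.rpow_pos_of_pos hα0 _
  have hαβ : α < β := Real.rpow_lt_rpow hα0.le hθ2 (by positivity)
  have hβ0 : 0 < β := by linarith
  have hβ1 : β ≤ 1 := Real.rpow_le_one (by linarith) (by linarith) (by positivity)
  obtain ⟨N, hN0, hNlow, hNup, ⟨KN, hKN0, hNlip⟩, hNhom, hNsm⟩ := exists_gauge m d θ hθ1
  obtain ⟨χ, hχs, hχ0, hχ1, ⟨Kχ, hKχ0, hχlip⟩, hχone, hχzero, hχdep⟩ :=
    exists_cutoff m d ρ₁ ρ h0 h1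
  obtain ⟨g, g', δ, hδ0, hδ1, hgs, hgd, hg'0, hg'1, hg0, hg0', hgz⟩ :=
    exists_profile α β hα1 hαβ hβ1
  -- consequences for g
  have hgdiff : Differentiable ℝ g := fun t => (hgd t).differentiableAt
  have hganti : Antitone g := antitone_of_deriv_nonpos hgdiff fun t => by
    rw [(hgd t).deriv]; exact hg'0 t
  have hgnn : ∀ t, 0 ≤ g t := by
    intro t
    rcases le_total β t with h | h
    · rw [hgz t h]
    · have := hganti h; rwa [hgz β le_rfl] at this
  have hgle : ∀ t, 0 ≤ t → g t ≤ 1 := fun t ht => (hganti ht).trans hg0'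
  have hgl : ∀ t t', t ≤ t' → g t - g t' ≤ (1 - δ) * (t' - t) := by
    have hm : Monotone fun t => g t + (1 - δ) * t := by
      have hd' : ∀ t, HasDerivAt (fun t => g t + (1 - δ) * t) (g' t + (1 - δ)) t := by
        intro t
        have h := (hgd t).add ((hasDerivAt_id t).const_mul (1 - δ))
        simp only [mul_one] at h
        exact h
      apply monotone_of_deriv_nonneg (fun t => (hd' t).differentiableAt)
      intro t
      rw [(hd' t).deriv]
      linarith [hg'1 t]
    intro t t' h
    have := hm h
    simp only at this
    nlinarith
  have hglip : ∀ t t', |g t - g t'| ≤ |t - t'| := by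
    intro t t'
    rcases le_total t t' with h | h
    · rw [abs_of_nonneg (sub_nonneg.2 (hganti h)), abs_of_nonpos (sub_nonpos.2 h)]
      nlinarith [hgl t t' h]
    · rw [abs_of_nonpos (sub_nonpos.2 (hganti h)), abs_of_nonneg (sub_nonneg.2 h)]
      nlinarith [hgl t' t h]
  have hSmono : ∀ c : ℝ, 0 ≤ c → c ≤ 1 → StrictMono fun t => t + c * g t := by
    intro c hc0 hc1 t t' h
    have h' := hgl t t' h.le
    have h'' : 0 ≤ g t - g t' := sub_nonneg.2 (hganti h.le)
    simp only
    have : c * (g t - g t') ≤ g t - g t' := mul_le_of_le_one_left h'' hc1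
    nlinarith
  -- the functions
  set σ : Eucl m → ℝ := fun x => N x ^ (1 / (n : ℝ)) with hσ
  set B : Eucl m → ℝ := fun x => 1 + χ x * g (σ x) / σ x with hB
  set A : Eucl m → ℝ := fun x => B x ^ n with hA
  set Φ : Eucl m → Eucl m := fun x => x + (A x - 1) • projL m d x with hΦ
  have hσ0 : ∀ x, 0 ≤ σ x := fun x => Real.rpow_nonneg (hN0 x) _
  have hσn : ∀ x, σ x ^ n = N x := by
    intro x; simp only [hσ]; rw [one_div]; exact Real.rpow_inv_natCast_pow (hN0 x) hn0
  have hB1 : ∀ x, 1 ≤ B x := by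
    intro x
    have : 0 ≤ χ x * g (σ x) / σ x := div_nonneg (mul_nonneg (hχ0 x) (hgnn _)) (hσ0 x)
    simp only [hB]; linarith
  have hA1 : ∀ x, 1 ≤ A x := fun x => one_le_pow₀ (hB1 x)
  have hNpos : ∀ x, (∃ i : Fin m, (i : ℕ) < d ∧ x i ≠ 0) → 0 < N x := by
    rintro x ⟨i, hi, hx⟩
    exact lt_of_lt_of_le (abs_pos.2 hx) (hNlow x i hi)
  have hNzero : ∀ x, ¬ (∃ i : Fin m, (i : ℕ) < d ∧ x i ≠ 0) → projL m d x = 0 := by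
    intro x hx
    push Not at hx
    ext i
    rw [projL_apply]
    split_ifs with h
    · simpa using hx i h
    · rfl
  have hσpos : ∀ x, 0 < N x → 0 < σ x := fun x hx => Real.rpow_pos_of_pos hx _
  have hAN : ∀ x, 0 < N x → A x * N x = (σ x + χ x * g (σ x)) ^ n := by
    intro x hx
    have := hσpos x hx
    rw [← hσn]
    simp only [hA, hB]
    rw [← mul_pow]
    congr 1
    field_simp
  have hΦlow : ∀ x, ∀ i : Fin m, (i : ℕ) < d → Φ x i = A x * x i := by
    intro x i hi
    simp only [hΦ, PiLp.add_apply, PiLp.smul_apply, projL_apply, hi, if_true, smul_eq_mul]; ring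
  have hΦhigh : ∀ x, ∀ i : Fin m, d ≤ (i : ℕ) → Φ x i = x i := by
    intro x i hi
    simp only [hΦ, PiLp.add_apply, PiLp.smul_apply, projL_apply, not_lt.2 hi, if_false,
      smul_eq_mul]; ring
  have hAone : ∀ x, (β ≤ σ x ∨ χ x = 0) → A x = 1 := by
    rintro x (h | h)
    · simp [hA, hB, hgz _ h]
    · simp [hA, hB, h]
  have hσβ : ∀ x, 1 - ρ ≤ N x → β ≤ σ x := fun x hx =>
    Real.rpow_le_rpow (by linarith) hx (by positivity)
  -- bounds on the image of the cube
  have himg : ∀ x, (∃ i : Fin m, (i : ℕ) < d ∧ x i ≠ 0) →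
      (∀ i : Fin m, (i : ℕ) < d → |x i| < 1 - ρ) →
      ∀ i : Fin m, (i : ℕ) < d → |Φ x i| < 1 - ρ := by
    intro x hx hxi i hi
    rw [hΦlow x i hi]
    rcases le_or_gt β (σ x) with h | h
    · rw [hAone x (Or.inl h), one_mul]; exact hxi i hi
    · have hNx := hNpos x hx
      have e1 : |A x * x i| ≤ A x * N x := by
        rw [abs_mul, abs_of_nonneg (by linarith [hA1 x])]
        exact mul_le_mul_of_nonneg_left (hNlow x i hi) (by linarith [hA1 x])
      rw [hAN x hNx] at e1
      refine lt_of_le_of_lt e1 ?_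
      rw [← hβn]
      apply pow_lt_pow_left₀ _ _ hn0
      · have := hSmono (χ x) (hχ0 x) (hχ1 x) h
        simpa [hgz β le_rfl] using this
      · exact add_nonneg (hσ0 x) (mul_nonneg (hχ0 x) (hgnn _))
  have hnotT : ∀ x, (∀ i : Fin m, d ≤ (i : ℕ) → |x i| ≤ ρ) → x ∉ dualPiece m d ρ →
      ∃ i : Fin m, (i : ℕ) < d ∧ x i ≠ 0 := by
    intro x hx hxT
    by_contra hcon
    push Not at hcon
    exact hxT ⟨hcon, hx⟩
  -- smoothness of A
  have hAs : ∀ x, 0 < N x → ContDiffAt ℝ (⊤ : ℕ∞) A x := by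
    intro x hx
    have hσs : ContDiffAt ℝ (⊤ : ℕ∞) σ x := (hNsm x hx).rpow_const_of_ne hx.ne'
    have hgσ : ContDiffAt ℝ (⊤ : ℕ∞) (fun x => g (σ x)) x :=
      hgs.contDiffAt.comp x hσs
    exact (contDiffAt_const.add ((hχs.contDiffAt.mul hgσ).div hσs (hσpos x hx).ne')).pow n
  have hNc : Continuous N := by
    apply LipschitzWith.continuous (K := ⟨KN, hKN0⟩)
    apply LipschitzWith.of_dist_le_mul
    intro x y
    rw [Real.dist_eq, dist_eq_norm]; exact hNlip x y
  have hσc : Continuous σ := hNc.rpow_const fun x => Or.inr (by positivity)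
  have hAm : Measurable A := by
    have e1 : Measurable σ := hσc.measurable
    have e2 : Measurable χ := hχs.continuous.measurable
    have e3 : Measurable fun x => g (σ x) := (hgs.continuous.comp hσc).measurable
    exact (measurable_const.add ((e2.mul e3).div e1)).pow_const n
  refine ⟨Φ, A, fun x => ContinuousLinearMap.id ℝ (Eucl m) + (A x - 1) • projL m d +
      (fderiv ℝ A x).smulRight (projL m d x),
    1 + ‖projL m d‖ + ‖projL m d‖ + (KN + ((k + 1) * 4 ^ (k + 1) + 8 ^ (k + 1)) * (KN + Kχ)) *
      Real.sqrt m, δ, by positivity, hδ0, ?_, ?_, ?_, ?_, ?_, ?_, hA1, ?_, ?_⟩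
  · -- measurable
    have : Measurable fun x => projL m d x := (projL m d).continuous.measurable
    exact measurable_id.add ((hAm.sub_const 1).smul this)
  · -- smooth
    intro x hx
    apply ContDiffAt.contDiffWithinAt
    by_cases hx0 : ∃ i : Fin m, (i : ℕ) < d ∧ x i ≠ 0
    · have := hAs x (hNpos x hx0)
      exact contDiffAt_id.add ((this.sub contDiffAt_const).smul
        (projL m d).contDiff.contDiffAt)
    · have hex : ∃ i : Fin m, d ≤ (i : ℕ) ∧ ρ < |x i| := by
        by_contra hcon
        push Not at hcon
        exact hx0 (hnotT x hcon hx)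
      obtain ⟨i, hi, hxi⟩ := hex
      have hopen : ∀ᶠ y : Eucl m in nhds x, ρ < |y i| := by
        have hc : Continuous fun y : Eucl m => |y i| := by fun_prop
        exact hc.continuousAt.eventually_const_lt hxi
      have hev : Φ =ᶠ[nhds x] id := by
        filter_upwards [hopen] with y hy
        have : A y = 1 := hAone y (Or.inr (hχzero y ⟨i, hi, hy.le⟩))
        simp [hΦ, this]
      exact contDiffAt_id.congr_of_eventuallyEq hev
  · -- injective
    intro x y hxy
    have hhigh : ∀ i : Fin m, d ≤ (i : ℕ) → x i = y i := by
      intro i hi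
      rw [← hΦhigh x i hi, ← hΦhigh y i hi, hxy]
    have hlow : ∀ i : Fin m, (i : ℕ) < d → A x * x i = A y * y i := by
      intro i hi
      rw [← hΦlow x i hi, ← hΦlow y i hi, hxy]
    have hAx : 0 < A x := by linarith [hA1 x]
    have hAy : 0 < A y := by linarith [hA1 y]
    have hNN : A x * N x = A y * N y := by
      rw [← hNhom x (A x • x) (A x) hAx.le (fun i _ => by simp),
        ← hNhom y (A x • x) (A y) hAy.le (fun i hi => by simpa using hlow i hi)]
    by_cases hx0 : 0 < N x
    · have hy0 : 0 < N y := by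
        have : 0 < A y * N y := by rw [← hNN]; positivity
        exact pos_of_mul_pos_right this hAy.le
      have hχe : χ x = χ y := hχdep x y hhigh
      rw [hAN x hx0, hAN y hy0, hχe] at hNN
      have hss : σ x + χ y * g (σ x) = σ y + χ y * g (σ y) :=
        (pow_left_inj₀ (add_nonneg (hσ0 x) (mul_nonneg (hχ0 y) (hgnn _)))
          (add_nonneg (hσ0 y) (mul_nonneg (hχ0 y) (hgnn _))) hn0).1 hNN
      have hσe : σ x = σ y := (hSmono (χ y) (hχ0 y) (hχ1 y)).injective hss
      have hAe : A x = A y := by simp only [hA, hB, hχe, hσe]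
      ext i
      rcases lt_or_ge (i : ℕ) d with hi | hi
      · have := hlow i hi
        rw [hAe] at this
        exact mul_left_cancel₀ hAy.ne' this
      · exact hhigh i hi
    · have hx0' : N x = 0 := le_antisymm (not_lt.1 hx0) (hN0 x)
      have hy0' : N y = 0 := by
        rw [hx0', mul_zero] at hNN
        exact (mul_eq_zero.1 hNN.symm).resolve_left hAy.ne'
      ext i
      rcases lt_or_ge (i : ℕ) d with hi | hi
      · have e1 := hNlow x i hi
        have e2 := hNlow y i hi
        rw [hx0'] at e1; rw [hy0'] at e2
        rw [abs_nonpos_iff.1 e1, abs_nonpos_iff.1 e2]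
      · exact hhigh i hi
  · -- support
    intro x hx
    have : A x = 1 := by
      apply hAone
      by_contra hcon
      push Not at hcon
      apply hx
      intro i
      refine ⟨fun hi => ?_, fun hi => ?_⟩
      · by_contra h
        exact absurd (hσβ x ((not_lt.1 h).trans (hNlow x i hi))) (not_le.2 hcon.1)
      · by_contra h
        exact hcon.2 (hχzero x ⟨i, hi, not_lt.1 h⟩)
    simp [hΦ, this]
  · -- image of Q₂
    rintro x ⟨hx, hxT⟩
    have hx0 := hnotT x (fun i hi => (((hx i).2 hi).trans h1).le) hxT
    have hNx := hNpos x hx0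
    refine ⟨fun i => ⟨fun hi => himg x hx0 (fun j hj => (hx j).1 hj) i hi, fun hi => ?_⟩, ?_⟩
    · rw [hΦhigh x i hi]; exact (hx i).2 hi
    · intro hcon
      have hχ : χ x = 1 := hχone x fun i hi => ((hx i).2 hi).le
      -- every low coordinate is small
      have hAx : 0 < A x := by linarith [hA1 x]
      have hS : θ * (1 - ρ₂) ≤ A x * N x := by
        rw [hAN x hNx, ← hαn, hχ]
        apply pow_le_pow_left₀ hα1.le
        have := (hSmono 1 zero_le_one le_rfl).monotone (hσ0 x)
        simp only [zero_add, one_mul] at this ⊢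
        linarith
      obtain ⟨i₀, hi₀, -⟩ := hx0
      -- maximal coordinate
      obtain ⟨j, hj, hjmax⟩ := Finset.exists_max_image
        (Finset.univ.filter fun i : Fin m => (i : ℕ) < d) (fun i => |x i|)
        ⟨i₀, by simp [hi₀]⟩
      simp only [Finset.mem_filter, Finset.mem_univ, true_and] at hj hjmax
      have hNj := hNup x |x j| (abs_nonneg _) hjmax
      have hc := (hcon j).1 hj
      rw [hΦlow x j hj, abs_mul, abs_of_pos hAx] at hc
      have : A x * N x ≤ θ * (A x * |x j|) := by nlinarith
      nlinarith
  · -- image of Q₃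
    rintro x ⟨hx, hxT⟩
    have hx0 := hnotT x (fun i hi => ((hx i).2 hi).le) hxT
    refine fun i => ⟨fun hi => himg x hx0 (fun j hj => (hx j).1 hj) i hi, fun hi => ?_⟩
    rw [hΦhigh x i hi]; exact (hx i).2 hi
  · -- Lipschitz-type bound
    intro x y hx hy
    have hNx := hNpos x hx
    have hNy := hNpos y hy
    have hAx := hA1 x
    set C₀ : ℝ := (k + 1) * 4 ^ (k + 1) + 8 ^ (k + 1) with hC₀
    have hC₀0 : 0 ≤ C₀ := by positivity
    have hF : |A x * N x - A y * N y| ≤ C₀ * A x * ((KN + Kχ) * ‖x - y‖) := by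
      have := scalar_lip k g (fun t _ => hgnn t) hgle (fun t t' _ _ => hglip t t')
        (fun t ht => hgz t (hβ1.trans ht)) (χ x) (χ y) (σ x) (σ y) (hχ0 x) (hχ1 x) (hχ0 y)
        (hχ1 y) (hσpos x hNx) (hσpos y hNy)
      rw [← hn, ← hAN x hNx, ← hAN y hNy, hσn, hσn] at this
      have e : ((σ x + χ x * g (σ x)) / σ x) ^ n = A x := by
        have := hσpos x hNx
        simp only [hA, hB]; congr 1; field_simp
      rw [e] at this
      refine this.trans ?_
      have e1 := hNlip x y
      have e2 := hχlip x y
      have e3 : |N x - N y| + |χ x - χ y| ≤ (KN + Kχ) * ‖x - y‖ := by linarith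
      exact mul_le_mul_of_nonneg_left e3 (by positivity)
    have hPy : ‖projL m d y‖ ≤ Real.sqrt m * N y := norm_projL_le m d y (N y) hNy.le (hNlow y)
    have hAA : |A x - A y| * N y ≤ A x * (KN * ‖x - y‖) + C₀ * A x * ((KN + Kχ) * ‖x - y‖) := by
      have e : |A x - A y| * N y = |(A x * N x - A y * N y) + A x * (N y - N x)| := by
        rw [← abs_of_pos hNy, ← abs_mul, abs_of_pos hNy]; congr 1; ring
      rw [e]
      refine (abs_add_le _ _).trans ?_
      rw [abs_mul, abs_of_pos (by linarith : 0 < A x)]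
      have e1 := hNlip y x
      rw [norm_sub_rev] at e1
      have := mul_le_mul_of_nonneg_left e1 (by linarith : 0 ≤ A x)
      linarith
    have hsecond : ‖(A x - A y) • projL m d y‖ ≤
        (KN + C₀ * (KN + Kχ)) * Real.sqrt m * A x * ‖x - y‖ := by
      rw [norm_smul, Real.norm_eq_abs]
      calc |A x - A y| * ‖projL m d y‖ ≤ |A x - A y| * (Real.sqrt m * N y) := by gcongr
        _ = Real.sqrt m * (|A x - A y| * N y) := by ring
        _ ≤ Real.sqrt m * (A x * (KN * ‖x - y‖) + C₀ * A x * ((KN + Kχ) * ‖x - y‖)) := by gcongr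
        _ = _ := by ring
    have hdec : Φ x - Φ y = (x - y) - projL m d (x - y) + A x • projL m d (x - y) +
        (A x - A y) • projL m d y := by
      simp only [hΦ, map_sub]; module
    have hp1 := (projL m d).le_opNorm (x - y)
    rw [hdec]
    have t1 := norm_add_le ((x - y) - projL m d (x - y) + A x • projL m d (x - y))
      ((A x - A y) • projL m d y)
    have t2 := norm_add_le ((x - y) - projL m d (x - y)) (A x • projL m d (x - y))
    have t3 := norm_sub_le (x - y) (projL m d (x - y))
    have t4 : ‖A x • projL m d (x - y)‖ ≤ A x * (‖projL m d‖ * ‖x - y‖) := by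
      rw [norm_smul, Real.norm_of_nonneg (by linarith)]; gcongr
    have t5 : ‖x - y‖ ≤ A x * ‖x - y‖ := le_mul_of_one_le_left (norm_nonneg _) hAx
    have t6 : ‖projL m d‖ * ‖x - y‖ ≤ A x * (‖projL m d‖ * ‖x - y‖) :=
      le_mul_of_one_le_left (by positivity) hAx
    calc _ ≤ A x * ‖x - y‖ + A x * (‖projL m d‖ * ‖x - y‖) + A x * (‖projL m d‖ * ‖x - y‖) +
          (KN + C₀ * (KN + Kχ)) * Real.sqrt m * A x * ‖x - y‖ := by linarith
      _ = _ := by ring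
  · -- derivative
    intro x hx
    have hNx := hNpos x hx
    have hσx := hσpos x hNx
    have hAd : HasFDerivAt A (fderiv ℝ A x) x :=
      ((hAs x hNx).differentiableAt (by simp)).hasFDerivAt
    have hΦd : HasFDerivAt Φ (ContinuousLinearMap.id ℝ (Eucl m) + (A x - 1) • projL m d +
        (fderiv ℝ A x).smulRight (projL m d x)) x := by
      have := (hasFDerivAt_id x).add ((hAd.sub_const 1).smul (projL m d).hasFDerivAt)
      refine this.congr_fderiv ?_
      rw [add_assoc]
    refine ⟨hΦd, ?_⟩
    have hAx : 0 < A x := by linarith [hA1 x]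
    rw [det_rank_one m d hd1 hdm (A x) hAx.ne']
    have hdir : fderiv ℝ A x (projL m d x) = B x ^ (n - 1) * (χ x * (g' (σ x) - g (σ x) / σ x)) := by
      have hcurve : HasDerivAt (fun τ : ℝ => x + τ • projL m d x) (projL m d x) 0 := by
        simpa using ((hasDerivAt_id (0 : ℝ)).smul_const (projL m d x)).const_add x
      have hcomp : HasDerivAt (fun τ : ℝ => A (x + τ • projL m d x))
          (fderiv ℝ A x (projL m d x)) 0 := by
        have hAd' : HasFDerivAt A (fderiv ℝ A x) (x + (0 : ℝ) • projL m d x) := by simpa using hAd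
        exact hAd'.comp_hasDerivAt (0 : ℝ) hcurve
      have hrad := radial_deriv n (by omega) g g' hgd (χ x) (σ x) hσx
      have hev : (fun τ : ℝ => A (x + τ • projL m d x)) =ᶠ[nhds 0]
          fun τ : ℝ => (1 + χ x * g (σ x * (1 + τ) ^ (1 / (n : ℝ))) /
            (σ x * (1 + τ) ^ (1 / (n : ℝ)))) ^ n := by
        filter_upwards [eventually_gt_nhds (show (-1 : ℝ) < 0 by norm_num)] with τ hτ
        have e1 : χ (x + τ • projL m d x) = χ x := by
          apply hχdep
          intro i hi
          simp [projL_apply, not_lt.2 hi]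
        have e2 : N (x + τ • projL m d x) = (1 + τ) * N x := by
          apply hNhom _ _ _ (by linarith)
          intro i hi
          simp [projL_apply, hi]; ring
        have e3 : σ (x + τ • projL m d x) = σ x * (1 + τ) ^ (1 / (n : ℝ)) := by
          simp only [hσ]
          rw [e2, Real.mul_rpow (by linarith) (hN0 x), mul_comm]
        simp only [hA, hB, e1, e3]
      exact hcomp.unique (hrad.congr_of_eventuallyEq hev)
    have hBx : 0 < B x := by linarith [hB1 x]
    have hsum : A x + fderiv ℝ A x (projL m d x) = B x ^ k * (1 + χ x * g' (σ x)) := by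
      rw [hdir, hn, Nat.add_sub_cancel]
      have e1 : A x = B x ^ k * B x := by simp only [hA]; rw [hn, pow_succ]
      have e2 : B x = 1 + χ x * (g (σ x) / σ x) := by simp only [hB]; ring
      rw [e1, ← mul_add]
      congr 1
      linear_combination e2
    have hδle : δ ≤ 1 + χ x * g' (σ x) := by
      have := hg'1 (σ x); have := hg'0 (σ x); have := hχ0 x; have := hχ1 x
      nlinarith
    have hpos1 : 0 ≤ 1 + χ x * g' (σ x) := hδ0.le.trans hδle
    rw [hsum, abs_of_nonneg (by positivity)]
    have hpow : A x ^ a ≤ A x ^ (d - 1) * B x ^ k := by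
      simp only [hA]
      rw [← Real.rpow_natCast (B x) n, ← Real.rpow_mul hBx.le]
      calc B x ^ ((n : ℝ) * a) ≤ B x ^ ((n : ℝ) * d - 1) :=
            Real.rpow_le_rpow_of_exponent_le (hB1 x) hna
        _ = _ := by
          rw [← Real.rpow_natCast (B x ^ (n : ℝ)), ← Real.rpow_mul hBx.le,
            ← Real.rpow_natCast (B x) k, ← Real.rpow_add hBx]
          congr 1
          rw [Nat.cast_sub hd1, hn]; push_cast; ring
    calc δ * A x ^ a ≤ (1 + χ x * g' (σ x)) * (A x ^ (d - 1) * B x ^ k) := by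
          gcongr
      _ = _ := by ring

/-- Scaling of `rect`. -/
lemma rect_scale (m d : ℕ) (a b η : ℝ) (hη : 0 < η) (x : Eucl m) :
    x ∈ rect m d (a * η) (b * η) ↔ η⁻¹ • x ∈ rect m d a b := by
  have key : ∀ (i : Fin m) (t : ℝ), |(η⁻¹ • x) i| < t ↔ |x i| < t * η := by
    intro i t
    rw [PiLp.smul_apply, smul_eq_mul, abs_mul, abs_of_pos (inv_pos.2 hη), inv_mul_lt_iff₀ hη,
      mul_comm]
  simp only [rect, mem_setOf_eq, key]

/-- Scaling of `dualPiece`. -/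
lemma dualPiece_scale (m d : ℕ) (b η : ℝ) (hη : 0 < η) (x : Eucl m) :
    x ∈ dualPiece m d (b * η) ↔ η⁻¹ • x ∈ dualPiece m d b := by
  have key : ∀ (i : Fin m) (t : ℝ), |(η⁻¹ • x) i| ≤ t ↔ |x i| ≤ t * η := by
    intro i t
    rw [PiLp.smul_apply, smul_eq_mul, abs_mul, abs_of_pos (inv_pos.2 hη), inv_mul_le_iff₀ hη,
      mul_comm]
  have key2 : ∀ (i : Fin m), (η⁻¹ • x) i = 0 ↔ x i = 0 := by
    intro i
    rw [PiLp.smul_apply, smul_eq_mul, mul_eq_zero, or_iff_right (inv_pos.2 hη).ne']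
  simp only [dualPiece, mem_setOf_eq, key, key2]

/-- The subspace where the first `d` coordinates vanish. -/
def lowZero (m d : ℕ) : Set (Eucl m) := {x : Eucl m | ∀ i : Fin m, (i : ℕ) < d → x i = 0}

lemma notMem_lowZero (m d : ℕ) (x : Eucl m) :
    x ∉ lowZero m d ↔ ∃ i : Fin m, (i : ℕ) < d ∧ x i ≠ 0 := by
  simp [lowZero]

lemma volume_lowZero (m d : ℕ) (hd1 : 1 ≤ d) (hdm : d ≤ m) : volume (lowZero m d) = 0 := by
  set i₀ : Fin m := ⟨0, by omega⟩ with hi₀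
  set S : Submodule ℝ (Eucl m) :=
    LinearMap.ker (EuclideanSpace.proj i₀ : Eucl m →L[ℝ] ℝ).toLinearMap with hS
  have hne : S ≠ ⊤ := by
    intro h
    have : (EuclideanSpace.single i₀ (1 : ℝ)) ∈ S := by rw [h]; trivial
    simp [hS] at this
  refine measure_mono_null ?_ (Measure.addHaar_submodule volume S hne)
  intro x hx
  have := hx i₀ (by simp [hi₀]; omega)
  simpa [hS] using this

lemma measurableSet_lowZero (m d : ℕ) : MeasurableSet (lowZero m d) := by
  have : IsClosed (lowZero m d) := by
    simp only [lowZero, setOf_forall]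
    refine isClosed_iInter fun i => isClosed_iInter fun _ => ?_
    exact isClosed_eq (by fun_prop) continuous_const
  exact this.measurableSet

/-- Change of variables. -/
lemma change_var (m : ℕ) (a δ : ℝ) (hδ : 0 < δ) (Φ : Eucl m → Eucl m) (A : Eucl m → ℝ)
    (Φ' : Eucl m → Eucl m →L[ℝ] Eucl m) (ω Z : Set (Eucl m)) (hω : MeasurableSet ω)
    (hZm : MeasurableSet Z) (hZ : volume Z = 0) (hinj : Function.Injective Φ)
    (hmaps : ∀ x ∈ ω \ Z, Φ x ∈ ω)
    (hder : ∀ x ∈ ω \ Z, HasFDerivAt Φ (Φ' x) x ∧ δ * A x ^ a ≤ |(Φ' x).det|)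
    (f : Eucl m → ℝ≥0∞) :
    ∫⁻ x in ω, ENNReal.ofReal (A x ^ a) * f (Φ x) ≤ ENNReal.ofReal δ⁻¹ * ∫⁻ x in ω, f x := by
  have hr : volume.restrict (ω \ Z) = volume.restrict ω :=
    Measure.restrict_congr_set (diff_null_ae_eq_self hZ)
  have hsm : MeasurableSet (ω \ Z) := hω.diff hZm
  rw [← hr]
  calc ∫⁻ x in ω \ Z, ENNReal.ofReal (A x ^ a) * f (Φ x)
      ≤ ∫⁻ x in ω \ Z, ENNReal.ofReal δ⁻¹ * (ENNReal.ofReal |(Φ' x).det| * f (Φ x)) := by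
        refine setLIntegral_mono' hsm ?_
        intro x hx
        rw [← mul_assoc, ← ENNReal.ofReal_mul (by positivity)]
        gcongr
        rw [le_inv_mul_iff₀ hδ]
        exact (hder x hx).2
    _ = ENNReal.ofReal δ⁻¹ * ∫⁻ x in ω \ Z, ENNReal.ofReal |(Φ' x).det| * f (Φ x) :=
        lintegral_const_mul' _ _ ENNReal.ofReal_ne_top
    _ = ENNReal.ofReal δ⁻¹ * ∫⁻ x in Φ '' (ω \ Z), f x := by
        rw [lintegral_image_eq_lintegral_abs_det_fderiv_mul volume hsm
          (fun x hx => (hder x hx).1.hasFDerivWithinAt) hinj.injOn]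
    _ ≤ ENNReal.ofReal δ⁻¹ * ∫⁻ x in ω \ Z, f x := by
        rw [hr]
        gcongr
        rintro _ ⟨x, hx, rfl⟩
        exact hmaps x hx

/-- **Thickening construction (building block, case `0 < s < 1`).**
Let `0 < s < 1`, `1 ≤ p < ∞`, `1 ≤ d ≤ m` with `d > sp`, `0 < ρ̲ < ρ < ρ̄ < 1`, and set
`Q₁ = Q^d_{(1-ρ̄)η} × Q^{m-d}_{ρ̲η}`, `Q₂ = Q^d_{(1-ρ)η} × Q^{m-d}_{ρ̲η}`,
`Q₃ = Q^d_{(1-ρ)η} × Q^{m-d}_{ρη}` and `T = {0}^d × Q̄^{m-d}_{ρη}`. For all `c, c′ > 0`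
there is `C > 0` depending only on `m, s, p, c, c′, ρ̲, ρ, ρ̄` such that for every `η > 0`
there is a smooth injective map `Φ : ℝ^m \ T → ℝ^m` supported in `Q₃` with
`Φ(Q₂ \ T) ⊆ Q₂ \ Q₁` and `Φ(Q₃ \ T) ⊆ Q₃`, such that for every measurable `ω` with
`Q₃ ⊆ ω ⊆ B^m_{cη}` satisfying `|B_λ(z) ∩ ω| ≥ c′ λ^m` for `z ∈ ω`, `0 < λ ≤ ½ diam ω`,
and every measurable `u : ω → ℝ^ν`, one has
`|u ∘ Φ|_{W^{s,p}(ω)} ≤ C |u|_{W^{s,p}(ω)}` and `‖u ∘ Φ‖_{L^p(ω)} ≤ C ‖u‖_{L^p(ω)}`. -/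
theorem thickening_block_fractional
    (m ν : ℕ) (s p : ℝ) (hs0 : 0 < s) (hs1 : s < 1) (hp : 1 ≤ p)
    (d : ℕ) (hd1 : 1 ≤ d) (hdm : d ≤ m) (hdsp : s * p < d)
    (ρ₁ ρ ρ₂ : ℝ) (h0 : 0 < ρ₁) (h1 : ρ₁ < ρ) (h2 : ρ < ρ₂) (h3 : ρ₂ < 1)
    (c c' : ℝ) (hc : 0 < c) (hc' : 0 < c') :
    ∃ C : ℝ, 0 < C ∧
      ∀ (η : ℝ), 0 < η →
        ∃ Φ : Eucl m → Eucl m,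
          ContDiffOn ℝ (⊤ : ℕ∞) Φ (dualPiece m d (ρ * η))ᶜ ∧
          InjOn Φ (dualPiece m d (ρ * η))ᶜ ∧
          (∀ x, x ∉ dualPiece m d (ρ * η) → x ∉ rect m d ((1 - ρ) * η) (ρ * η) → Φ x = x) ∧
          (∀ x ∈ rect m d ((1 - ρ) * η) (ρ₁ * η) \ dualPiece m d (ρ * η),
            Φ x ∈ rect m d ((1 - ρ) * η) (ρ₁ * η) \ rect m d ((1 - ρ₂) * η) (ρ₁ * η)) ∧
          (∀ x ∈ rect m d ((1 - ρ) * η) (ρ * η) \ dualPiece m d (ρ * η),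
            Φ x ∈ rect m d ((1 - ρ) * η) (ρ * η)) ∧
          ∀ ω : Set (Eucl m), MeasurableSet ω →
            rect m d ((1 - ρ) * η) (ρ * η) ⊆ ω → ω ⊆ Metric.ball 0 (c * η) →
            (∀ z ∈ ω, ∀ lam : ℝ, 0 < lam → 2 * ENNReal.ofReal lam ≤ EMetric.diam ω →
              ENNReal.ofReal (c' * lam ^ m) ≤ volume (Metric.ball z lam ∩ ω)) →
            ∀ u : Eucl m → Eucl ν, Measurable u →
              gagliardoSeminorm m s p ω (fun x => u (Φ x))
                ≤ ENNReal.ofReal C * gagliardoSeminorm m s p ω u ∧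
              eLpNorm (fun x => u (Φ x)) (ENNReal.ofReal p) (volume.restrict ω)
                ≤ ENNReal.ofReal C * eLpNorm u (ENNReal.ofReal p) (volume.restrict ω) := by
  have hp0 : 0 < p := by linarith
  have hsp : 0 < s * p := mul_pos hs0 hp0
  obtain ⟨Φ₁, A₁, Φ₁', L, δ, hL, hδ, hmeas, hsm, hinj, hid, hP4, hP5, hA1, hlip, hder⟩ :=
    unit_map m (s * p) d hd1 hdm hdsp ρ₁ ρ ρ₂ h0 h1 h2 h3
  set D : ℝ≥0∞ := ENNReal.ofReal δ⁻¹ with hD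
  have hDtop : D ≠ ⊤ := ENNReal.ofReal_ne_top
  obtain ⟨K, hKtop, hK⟩ := abstract_bound m ν s p hsp hp c' hc' L hL D hDtop
  have hKp : K ^ (1 / p) ≠ ⊤ := ENNReal.rpow_ne_top_of_nonneg (by positivity) hKtop
  have hDp : D ^ (1 / p) ≠ ⊤ := ENNReal.rpow_ne_top_of_nonneg (by positivity) hDtop
  refine ⟨(K ^ (1 / p)).toReal + (D ^ (1 / p)).toReal + 1, by positivity, ?_⟩
  set C : ℝ := (K ^ (1 / p)).toReal + (D ^ (1 / p)).toReal + 1 with hC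
  have hKC : K ^ (1 / p) ≤ ENNReal.ofReal C := by
    rw [← ENNReal.ofReal_toReal hKp]
    apply ENNReal.ofReal_le_ofReal
    have : 0 ≤ (D ^ (1 / p)).toReal := ENNReal.toReal_nonneg
    linarith
  have hDC : D ^ (1 / p) ≤ ENNReal.ofReal C := by
    rw [← ENNReal.ofReal_toReal hDp]
    apply ENNReal.ofReal_le_ofReal
    have : 0 ≤ (K ^ (1 / p)).toReal := ENNReal.toReal_nonneg
    linarith
  intro η hη
  have hη' : η ≠ 0 := hη.ne'
  have hinvη : ∀ x : Eucl m, η⁻¹ • η • x = x := fun x => inv_smul_smul₀ hη' x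
  have hηinv : ∀ x : Eucl m, η • η⁻¹ • x = x := fun x => smul_inv_smul₀ hη' x
  set Φ : Eucl m → Eucl m := fun x => η • Φ₁ (η⁻¹ • x) with hΦ
  have hΦid : ∀ x, x ∉ rect m d ((1 - ρ) * η) (ρ * η) → Φ x = x := by
    intro x hx
    rw [rect_scale m d _ _ η hη] at hx
    simp only [hΦ, hid _ hx, hηinv]
  have hΦ5 : ∀ x ∈ rect m d ((1 - ρ) * η) (ρ * η) \ dualPiece m d (ρ * η),
      Φ x ∈ rect m d ((1 - ρ) * η) (ρ * η) := by
    rintro x ⟨hx1, hx2⟩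
    rw [rect_scale m d _ _ η hη] at hx1 ⊢
    rw [dualPiece_scale m d _ η hη] at hx2
    simp only [hΦ, hinvη]
    exact hP5 _ ⟨hx1, hx2⟩
  have hΦinj : Function.Injective Φ := by
    intro x y hxy
    have h := hinj (smul_right_injective _ hη' hxy)
    exact smul_right_injective _ (inv_ne_zero hη') h
  have hΦmeas : Measurable Φ := (hmeas.comp (measurable_const_smul η⁻¹)).const_smul η
  have hlow : ∀ x : Eucl m, x ∉ lowZero m d →
      ∃ i : Fin m, (i : ℕ) < d ∧ (η⁻¹ • x) i ≠ 0 := by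
    intro x hx
    obtain ⟨i, hi, hxi⟩ := (notMem_lowZero m d x).1 hx
    refine ⟨i, hi, ?_⟩
    rw [PiLp.smul_apply, smul_eq_mul]
    exact mul_ne_zero (inv_ne_zero hη') hxi
  refine ⟨Φ, ?_, hΦinj.injOn, fun x _ hx => hΦid x hx, ?_, hΦ5, ?_⟩
  · have h1 : ContDiffOn ℝ (⊤ : ℕ∞) (fun x : Eucl m => Φ₁ (η⁻¹ • x)) (dualPiece m d (ρ * η))ᶜ := by
      refine hsm.comp (contDiff_const_smul η⁻¹).contDiffOn ?_
      intro x hx hx'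
      exact hx ((dualPiece_scale m d _ η hη x).2 hx')
    exact h1.const_smul η
  · rintro x ⟨hx1, hx2⟩
    rw [rect_scale m d _ _ η hη] at hx1
    rw [dualPiece_scale m d _ η hη] at hx2
    rw [mem_diff, rect_scale m d _ _ η hη, rect_scale m d _ _ η hη]
    simp only [hΦ, hinvη]
    exact hP4 _ ⟨hx1, hx2⟩
  · intro ω hωm hωQ _ hω u hu
    have hmaps : ∀ x ∈ ω \ lowZero m d, Φ x ∈ ω := by
      rintro x ⟨hx, hxZ⟩
      by_cases hxr : x ∈ rect m d ((1 - ρ) * η) (ρ * η)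
      · exact hωQ (hΦ5 x ⟨hxr, fun h => hxZ h.1⟩)
      · rw [hΦid x hxr]; exact hx
    have hder' : ∀ x ∈ ω \ lowZero m d, HasFDerivAt Φ (Φ₁' (η⁻¹ • x)) x ∧
        δ * A₁ (η⁻¹ • x) ^ (s * p) ≤ |(Φ₁' (η⁻¹ • x)).det| := by
      rintro x ⟨-, hxZ⟩
      obtain ⟨h1, h2⟩ := hder _ (hlow x hxZ)
      refine ⟨?_, h2⟩
      have h3 : HasFDerivAt (fun x : Eucl m => η⁻¹ • x)
          (η⁻¹ • ContinuousLinearMap.id ℝ (Eucl m)) x := (hasFDerivAt_id x).const_smul η⁻¹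
      have h4 := (h1.comp x h3).const_smul η
      refine h4.congr_fderiv ?_
      ext v : 1
      simp [hηinv]
    have hcov : ∀ f : Eucl m → ℝ≥0∞,
        ∫⁻ x in ω, ENNReal.ofReal (A₁ (η⁻¹ • x) ^ (s * p)) * f (Φ x) ≤ D * ∫⁻ x in ω, f x :=
      change_var m (s * p) δ hδ Φ (fun x => A₁ (η⁻¹ • x)) (fun x => Φ₁' (η⁻¹ • x)) ω
        (lowZero m d) hωm (measurableSet_lowZero m d) (volume_lowZero m d hd1 hdm) hΦinj hmaps
        hder'
    constructor
    · have hG := hK Φ (fun x => A₁ (η⁻¹ • x)) ω (lowZero m d) hΦmeas hωm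
        (volume_lowZero m d hd1 hdm) hmaps (fun x => by linarith [hA1 (η⁻¹ • x)])
        (by
          rintro x ⟨-, hx⟩ y ⟨-, hy⟩
          have h := hlip _ _ (hlow x hx) (hlow y hy)
          simp only [hΦ]
          rw [← smul_sub, norm_smul]
          rw [← smul_sub, norm_smul, norm_inv] at h
          have hn : 0 < ‖η‖ := norm_pos_iff.2 hη'
          calc ‖η‖ * ‖Φ₁ (η⁻¹ • x) - Φ₁ (η⁻¹ • y)‖
              ≤ ‖η‖ * (L * A₁ (η⁻¹ • x) * (‖η‖⁻¹ * ‖x - y‖)) := by gcongr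
            _ = L * A₁ (η⁻¹ • x) * ‖x - y‖ := by field_simp)
        hcov hω u hu
      unfold gagliardoSeminorm
      calc gagliardoPow m s p ω (fun x => u (Φ x)) ^ (1 / p)
          ≤ (K * gagliardoPow m s p ω u) ^ (1 / p) :=
            ENNReal.rpow_le_rpow hG (by positivity)
        _ = K ^ (1 / p) * gagliardoPow m s p ω u ^ (1 / p) :=
            ENNReal.mul_rpow_of_nonneg _ _ (by positivity)
        _ ≤ _ := by gcongr
    · have hpz : ENNReal.ofReal p ≠ 0 := by simpa using hp0
      have hpt : (ENNReal.ofReal p).toReal = p := ENNReal.toReal_ofReal hp0.le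
      rw [eLpNorm_eq_lintegral_rpow_enorm_toReal hpz ENNReal.ofReal_ne_top,
        eLpNorm_eq_lintegral_rpow_enorm_toReal hpz ENNReal.ofReal_ne_top, hpt]
      have hG : ∫⁻ x in ω, ‖u (Φ x)‖ₑ ^ p ≤ D * ∫⁻ x in ω, ‖u x‖ₑ ^ p := by
        refine le_trans ?_ (hcov fun x => ‖u x‖ₑ ^ p)
        refine lintegral_mono fun x => ?_
        refine le_mul_of_one_le_left zero_le ?_
        rw [ENNReal.one_le_ofReal]
        exact Real.one_le_rpow (hA1 _) hsp.le
      calc (∫⁻ x in ω, ‖u (Φ x)‖ₑ ^ p) ^ (1 / p)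
          ≤ (D * ∫⁻ x in ω, ‖u x‖ₑ ^ p) ^ (1 / p) :=
            ENNReal.rpow_le_rpow hG (by positivity)
        _ = D ^ (1 / p) * (∫⁻ x in ω, ‖u x‖ₑ ^ p) ^ (1 / p) :=
            ENNReal.mul_rpow_of_nonneg _ _ (by positivity)
        _ ≤ _ := by gcongr
end
end
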